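/- arXiv:2508.15564 — 2 statements merged into one kernel-verified Lean document; each statement's English description precedes it below -/
import Mathlib

section
/- Let 1 ≤ p < ∞, 0 < s < 1, E ⊆ R^N open, Σ ⊆ E compact. Then cap_{s,p}(Σ; E) equals the infimum of the Gagliardo seminorm [φ]^p_{W^{s,p}(R^N)} over Lipschitz functions φ with compact support in E satisfying 0 ≤ φ ≤ 1 on R^N and φ = 1 on Σ. -/
open MeasureTheory Metric Filter
open scoped ENNReal

noncomputable section

abbrev Euc (N : ℕ) := EuclideanSpace ℝ (Fin N)

/-- The (p-th power of the) Gagliardo–Slobodeckii seminorm on `ℝ^N`. -/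
def gag (N : ℕ) (p s : ℝ) (u : Euc N → ℝ) : ℝ :=
  ∫ z : Euc N × Euc N, |u z.1 - u z.2| ^ p / ‖z.1 - z.2‖ ^ ((N : ℝ) + s * p)

/-- `u ∈ C^∞_0(Ω)`: smooth with compact support contained in `Ω`. -/
def TestOn {N : ℕ} (Ω : Set (Euc N)) (u : Euc N → ℝ) : Prop :=
  ContDiff ℝ (⊤ : ℕ∞) u ∧ HasCompactSupport u ∧ tsupport u ⊆ Ω

/-- The fractional principal frequency `λ^s_{p,q}(Ω)`. -/
def lam (N : ℕ) (p q s : ℝ) (Ω : Set (Euc N)) : ℝ :=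
  sInf { c | ∃ u : Euc N → ℝ, TestOn Ω u ∧ (∫ x in Ω, |u x| ^ q) = 1 ∧ c = gag N p s u }

/-- The homogeneous relative `(s,p)`-capacity of `A` in `E`. -/
def fcap (N : ℕ) (p s : ℝ) (A E : Set (Euc N)) : ℝ :=
  sInf { c | ∃ φ : Euc N → ℝ, TestOn E φ ∧ (∀ x ∈ A, 1 ≤ φ x) ∧ c = gag N p s φ }

/-- The fractional `s`-perimeter of a set `A ⊆ ℝ^N`. -/
def sPer (N : ℕ) (s : ℝ) (A : Set (Euc N)) : ℝ :=
  ∫ z : Euc N × Euc N,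
    |A.indicator (fun _ => (1 : ℝ)) z.1 - A.indicator (fun _ => (1 : ℝ)) z.2| /
      ‖z.1 - z.2‖ ^ ((N : ℝ) + s)

/-- An open set with smooth boundary, described as a regular sublevel set of a smooth function. -/
def SmoothBdry {N : ℕ} (O : Set (Euc N)) : Prop :=
  ∃ f : Euc N → ℝ, ContDiff ℝ (⊤ : ℕ∞) f ∧ O = {x | f x < 0} ∧ ∀ x, f x = 0 → fderiv ℝ f x ≠ 0

/-- The sharp constant in the fractional Sobolev inequality. -/
def sobConst (N : ℕ) (p s : ℝ) : ℝ :=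
  sSup {c | ∃ u : Euc N → ℝ, TestOn Set.univ u ∧ gag N p s u = 1 ∧
    c = (∫ x, |u x| ^ ((N : ℝ) * p / (N - s * p))) ^ (((N : ℝ) - s * p) / N)}

/-- Membership in `W̃^{s,p}_0(Ω)`, the closure of `C^∞_0(Ω)` in `W^{s,p}(ℝ^N)`. -/
def MemW0 (N : ℕ) (p s : ℝ) (Ω : Set (Euc N)) (V : Euc N → ℝ) : Prop :=
  ∃ u : ℕ → Euc N → ℝ, (∀ n, TestOn Ω (u n)) ∧
    Filter.Tendsto (fun n => (∫ x, |u n x - V x| ^ p) + gag N p s (fun x => u n x - V x))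
      Filter.atTop (nhds 0)

/-- The relative (local) `p`-capacity of `A` in `E`. -/
def pcap (N : ℕ) (p : ℝ) (A E : Set (Euc N)) : ℝ :=
  sInf { c | ∃ φ : Euc N → ℝ, TestOn E φ ∧ (∀ x ∈ A, 1 ≤ φ x) ∧
    c = ∫ x in E, ‖fderiv ℝ φ x‖ ^ p }

/-- The sharp constant in the local `p`-Poincaré inequality on `E`. -/
def lamLoc (N : ℕ) (p : ℝ) (E : Set (Euc N)) : ℝ :=
  sInf { c | ∃ u : Euc N → ℝ, TestOn E u ∧ (∫ x in E, |u x| ^ p) = 1 ∧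
    c = ∫ x in E, ‖fderiv ℝ u x‖ ^ p }

/-- The compact set `A ⊆ closure (B_r(x0))` is `(s,p,γ)`-negligible. -/
def Negligible (N : ℕ) (p s γ : ℝ) (x0 : Euc N) (r : ℝ) (A : Set (Euc N)) : Prop :=
  fcap N p s A (ball x0 (2 * r)) ≤ γ * fcap N p s (closedBall x0 r) (ball x0 (2 * r))

/-- The fractional `(p,γ)`-capacitary inradius of order `s` of `Ω` (valued in `ℝ≥0∞`). -/
def capInr (N : ℕ) (p s γ : ℝ) (Ω : Set (Euc N)) : ℝ≥0∞ :=
  sSup {R | ∃ r : ℝ, 0 < r ∧ R = ENNReal.ofReal r ∧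
    ∃ x0 : Euc N, Negligible N p s γ x0 r (closedBall x0 r \ Ω)}

end

/-! Truncating a test function `φ ≥ 1` on `A` to values in `[0, 1]` does not increase its energy and
gives an admissible Lipschitz function. Conversely, mollifying a Lipschitz function `φ` with
`φ = 1` on `A` gives test functions converging to `φ` uniformly, with a common Lipschitz constant
and supports in a common compact subset of `E`. Their energies converge to that of `φ`: for such a
sequence the integrands are dominated by `min (K * |x - y|) M ^ p / |x - y| ^ (N + s * p)`, which is
integrable over pairs with one point in a compact set because `0 < s < 1`. The mollifications are
only close to `1` on `A`, but dividing by `θ < 1` makes them admissible at the cost of a factor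
`θ ^ (-p)`, and `θ → 1` concludes. -/

lemma real_sSup_lowerBounds_eq_sInf (S : Set ℝ) : sSup (lowerBounds S) = sInf S := by
  rcases S.eq_empty_or_nonempty with rfl | hne
  · simp
  by_cases hbdd : BddBelow S
  · exact csSup_lowerBounds_eq_csInf hbdd hne
  · rw [Real.sInf_of_not_bddBelow hbdd, Set.not_nonempty_iff_eq_empty.1 hbdd, Real.sSup_empty]

section GagliardoEnergy

open Asymptotics Module Topology
open scoped NNReal ContDiff Convolution

variable {V F : Type*} [NormedAddCommGroup V] [NormedAddCommGroup F] {p β K M : ℝ}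

/-- The integrand of the `p`-th power of the Gagliardo seminorm. In dimension `d` the seminorm of
order `s ∈ (0, 1)` corresponds to `β = d + s * p`, so that `d < β < d + p`. -/
noncomputable def gagliardoIntegrand (p β : ℝ) (u : V → F) (z : V × V) : ℝ :=
  ‖u z.1 - u z.2‖ ^ p / ‖z.1 - z.2‖ ^ β

/-- The `p`-th power of the Gagliardo seminorm of `u` with respect to the measure `μ`, with the
exponent `β` of `gagliardoIntegrand` in place of the order of smoothness. -/
noncomputable def gagliardoEnergy [MeasurableSpace V] (μ : Measure V) (p β : ℝ) (u : V → F) : ℝ :=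
  ∫ z, gagliardoIntegrand p β u z ∂(μ.prod μ)

/-- Smooth functions with compact support contained in `E`: `TestOn` for an arbitrary normed space
and with vector values. -/
def IsTestFunctionOn [NormedSpace ℝ V] [NormedSpace ℝ F] (E : Set V) (φ : V → F) : Prop :=
  ContDiff ℝ ∞ φ ∧ HasCompactSupport φ ∧ tsupport φ ⊆ E

/-- The kernel `min (K * ‖w‖) M ^ p / ‖w‖ ^ β`, which bounds `gagliardoIntegrand p β u (x, x - w)`
for a `K`-Lipschitz function `u` whose oscillation is at most `M`. -/
noncomputable def truncatedKernel (p β K M : ℝ) (w : V) : ℝ :=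
  min (K * ‖w‖) M ^ p / ‖w‖ ^ β

/-- The truncated kernel localised to the pairs meeting `B`: a dominating function for the
Gagliardo integrands of equi-Lipschitz, equibounded functions supported in `B`. -/
noncomputable def gagliardoMajorant (p β K M : ℝ) (B : Set V) (z : V × V) : ℝ :=
  (B.indicator 1 z.1 + B.indicator 1 z.2) * truncatedKernel p β K M (z.1 - z.2)

lemma gagliardoIntegrand_nonneg (u : V → F) (z : V × V) : 0 ≤ gagliardoIntegrand p β u z := by
  unfold gagliardoIntegrand
  positivity

lemma gagliardoIntegrand_le_of_norm_sub_le {G : Type*} [NormedAddCommGroup G] (hp : 0 ≤ p)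
    {u : V → F} {v : V → G} {z : V × V} (h : ‖u z.1 - u z.2‖ ≤ ‖v z.1 - v z.2‖) :
    gagliardoIntegrand p β u z ≤ gagliardoIntegrand p β v z := by
  unfold gagliardoIntegrand
  gcongr

lemma gagliardoIntegrand_le_truncatedKernel (hp : 0 ≤ p) {u : V → F} {z : V × V}
    (hK : ‖u z.1 - u z.2‖ ≤ K * ‖z.1 - z.2‖) (hM : ‖u z.1 - u z.2‖ ≤ M) :
    gagliardoIntegrand p β u z ≤ truncatedKernel p β K M (z.1 - z.2) := by
  unfold gagliardoIntegrand truncatedKernel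
  gcongr
  exact le_min hK hM

lemma gagliardoIntegrand_le_gagliardoMajorant (hp : 0 < p) {u : V → F} {C : ℝ≥0} {B : Set V}
    (hu : LipschitzWith C u) (hM : ∀ x y, ‖u x - u y‖ ≤ M) (hB : Function.support u ⊆ B)
    (z : V × V) : gagliardoIntegrand p β u z ≤ gagliardoMajorant p β C M B z := by
  have hle : gagliardoIntegrand p β u z ≤ truncatedKernel p β C M (z.1 - z.2) :=
    gagliardoIntegrand_le_truncatedKernel hp.le (hu.norm_sub_le _ _) (hM _ _)
  have hker := (gagliardoIntegrand_nonneg u z).trans hle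
  have hzero : ∀ x ∉ B, u x = 0 := fun x hx => Function.notMem_support.1 fun h => hx (hB h)
  by_cases h₁ : z.1 ∈ B <;> by_cases h₂ : z.2 ∈ B <;> simp only [gagliardoMajorant, h₁, h₂,
    Set.indicator_of_mem, Set.indicator_of_notMem, not_false_eq_true, Pi.one_apply]
  · linarith
  · linarith
  · linarith
  · simp [gagliardoIntegrand, hzero _ h₁, hzero _ h₂, Real.zero_rpow hp.ne']

lemma gagliardoIntegrand_const_smul [NormedSpace ℝ F] (a : ℝ) (u : V → F) (z : V × V) :
    gagliardoIntegrand p β (a • u) z = |a| ^ p * gagliardoIntegrand p β u z := by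
  simp only [gagliardoIntegrand, Pi.smul_apply, ← smul_sub, norm_smul, Real.norm_eq_abs]
  rw [Real.mul_rpow (abs_nonneg a) (norm_nonneg _), mul_div_assoc]

lemma gagliardoEnergy_const_smul [NormedSpace ℝ F] [MeasurableSpace V] (μ : Measure V) (a : ℝ)
    (u : V → F) : gagliardoEnergy μ p β (a • u) = |a| ^ p * gagliardoEnergy μ p β u := by
  simp only [gagliardoEnergy, gagliardoIntegrand_const_smul, integral_const_mul]

lemma measurable_gagliardoIntegrand [MeasurableSpace V] [OpensMeasurableSpace V]
    [SecondCountableTopology V] {u : V → F} (hu : Continuous u) :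
    Measurable (gagliardoIntegrand p β u) := by
  have hnum : Measurable fun z : V × V => ‖u z.1 - u z.2‖ :=
    Continuous.measurable (by fun_prop)
  have hden : Measurable fun z : V × V => ‖z.1 - z.2‖ := Continuous.measurable (by fun_prop)
  exact (hnum.pow_const p).div (hden.pow_const β)

section Integrability

lemma integrableOn_Ioi_rpow_mul_min_rpow {σ : ℝ} (hσp : -p < σ) (hσ : σ < 0) (hK : 0 ≤ K)
    (hM : 0 ≤ M) : IntegrableOn (fun t : ℝ => t ^ (σ - 1) * min (K * t) M ^ p) (Set.Ioi 0) := by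
  have hp : 0 ≤ p := by linarith
  refine mellin_convergent_of_isBigO_scalar (a := 0) (b := -p) ?_ ?_ hσ ?_ hσp
  · have hcont : Continuous fun t : ℝ => min (K * t) M ^ p :=
      ((continuous_const.mul continuous_id).min continuous_const).rpow_const fun _ => .inr hp
    exact hcont.locallyIntegrable.locallyIntegrableOn _
  · refine .of_bound (M ^ p) ?_
    filter_upwards [eventually_gt_atTop 0] with t ht
    have hmin : 0 ≤ min (K * t) M := le_min (by positivity) hM
    rw [neg_zero, Real.rpow_zero, norm_one, mul_one, Real.norm_of_nonneg (by positivity)]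
    exact Real.rpow_le_rpow hmin (min_le_right _ _) hp
  · refine .of_bound (K ^ p) ?_
    filter_upwards [self_mem_nhdsWithin] with t (ht : 0 < t)
    have hmin : 0 ≤ min (K * t) M := le_min (by positivity) hM
    rw [neg_neg, Real.norm_of_nonneg (by positivity), Real.norm_of_nonneg (by positivity),
      ← Real.mul_rpow hK ht.le]
    exact Real.rpow_le_rpow hmin (min_le_left _ _) hp

variable [NormedSpace ℝ V] [FiniteDimensional ℝ V] [Nontrivial V] [MeasurableSpace V]
  [BorelSpace V] {μ : Measure V} [μ.IsAddHaarMeasure]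

lemma integrable_truncatedKernel (hβ : finrank ℝ V < β) (hβp : β < finrank ℝ V + p) (hK : 0 ≤ K)
    (hM : 0 ≤ M) : Integrable (truncatedKernel p β K M : V → ℝ) μ := by
  refine (integrable_fun_norm_addHaar μ (f := fun r => min (K * r) M ^ p / r ^ β)).2 <|
    (integrableOn_Ioi_rpow_mul_min_rpow (p := p) (σ := finrank ℝ V - β) (by linarith) (by linarith)
      hK hM).congr_fun (fun r (hr : 0 < r) => ?_) measurableSet_Ioi
  have hpow : r ^ (finrank ℝ V - β - 1) = r ^ (finrank ℝ V - 1) / r ^ β := by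
    rw [← Real.rpow_natCast, Nat.cast_pred finrank_pos, ← Real.rpow_sub hr]
    ring_nf
  rw [smul_eq_mul]
  dsimp only
  rw [hpow, mul_comm_div]

lemma integrable_gagliardoMajorant (hβ : finrank ℝ V < β) (hβp : β < finrank ℝ V + p)
    (hK : 0 ≤ K) (hM : 0 ≤ M) {B : Set V} (hB : MeasurableSet B) (hμB : μ B ≠ ⊤) :
    Integrable (gagliardoMajorant p β K M B) (μ.prod μ) := by
  have hind : Integrable (B.indicator (1 : V → ℝ)) μ :=
    (integrable_indicator_iff hB).2 (integrableOn_const hμB)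
  have hsnd : Integrable
      (fun z : V × V => B.indicator 1 z.2 * truncatedKernel p β K M (z.1 - z.2)) (μ.prod μ) :=
    hind.convolution_integrand (ContinuousLinearMap.mul ℝ ℝ)
      (integrable_truncatedKernel hβ hβp hK hM)
  refine (hsnd.swap.add hsnd).congr (.of_forall fun z => ?_)
  simp only [gagliardoMajorant, truncatedKernel, Pi.add_apply, Function.comp_apply, Prod.fst_swap,
    Prod.snd_swap, norm_sub_rev z.2 z.1, add_mul]

lemma integrable_gagliardoIntegrand (hβ : finrank ℝ V < β) (hβp : β < finrank ℝ V + p)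
    {u : V → F} {C : ℝ≥0} (hu : LipschitzWith C u) (hc : HasCompactSupport u) :
    Integrable (gagliardoIntegrand p β u) (μ.prod μ) := by
  obtain ⟨M, hM⟩ := hc.exists_bound_of_continuous hu.continuous
  have hM₀ : 0 ≤ M := (norm_nonneg _).trans (hM 0)
  refine (integrable_gagliardoMajorant hβ hβp C.2 (add_nonneg hM₀ hM₀) hc.measurableSet
    hc.measure_lt_top.ne).mono' (measurable_gagliardoIntegrand hu.continuous).aestronglyMeasurable
    (.of_forall fun z => ?_)
  rw [Real.norm_of_nonneg (gagliardoIntegrand_nonneg u z)]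
  exact gagliardoIntegrand_le_gagliardoMajorant (by linarith) hu
    (fun x y => norm_sub_le_of_le (hM x) (hM y)) (subset_tsupport u) z

lemma gagliardoEnergy_comp_le {G : Type*} [NormedAddCommGroup G] (hβ : finrank ℝ V < β)
    (hβp : β < finrank ℝ V + p) {u : V → F} {C : ℝ≥0} (hu : LipschitzWith C u)
    (hc : HasCompactSupport u) {f : F → G} (hf : LipschitzWith 1 f) :
    gagliardoEnergy μ p β (f ∘ u) ≤ gagliardoEnergy μ p β u :=
  integral_mono_of_nonneg (.of_forall fun z => gagliardoIntegrand_nonneg _ z)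
    (integrable_gagliardoIntegrand hβ hβp hu hc) <| .of_forall fun z =>
      gagliardoIntegrand_le_of_norm_sub_le (by linarith) <| by
        simpa using hf.norm_sub_le (u z.1) (u z.2)

lemma tendsto_gagliardoEnergy {ι : Type*} {l : Filter ι} [l.IsCountablyGenerated]
    (hβ : finrank ℝ V < β) (hβp : β < finrank ℝ V + p) {u : ι → V → F} {v : V → F} {C : ℝ≥0}
    {B : Set V} (hB : MeasurableSet B) (hμB : μ B ≠ ⊤) (hu : ∀ i, LipschitzWith C (u i))
    (hM₀ : 0 ≤ M) (hM : ∀ i x, ‖u i x‖ ≤ M) (huB : ∀ i, Function.support (u i) ⊆ B)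
    (hlim : ∀ x, Tendsto (u · x) l (𝓝 (v x))) :
    Tendsto (fun i => gagliardoEnergy μ p β (u i)) l (𝓝 (gagliardoEnergy μ p β v)) := by
  have hp : 0 < p := by linarith
  refine tendsto_integral_filter_of_dominated_convergence (gagliardoMajorant p β C (M + M) B)
    (.of_forall fun i => (measurable_gagliardoIntegrand (hu i).continuous).aestronglyMeasurable)
    (.of_forall fun i => .of_forall fun z => ?_)
    (integrable_gagliardoMajorant hβ hβp C.2 (add_nonneg hM₀ hM₀) hB hμB)
    (.of_forall fun z => ?_)
  · rw [Real.norm_of_nonneg (gagliardoIntegrand_nonneg _ z)]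
    exact gagliardoIntegrand_le_gagliardoMajorant hp (hu i)
      (fun x y => norm_sub_le_of_le (hM i x) (hM i y)) (huB i) z
  · exact ((((hlim z.1).sub (hlim z.2)).norm).rpow_const (.inr hp.le)).div_const _

end Integrability

section Mollification

variable [NormedSpace ℝ F]

lemma lipschitzWith_convolution [MeasurableSpace V] {μ : Measure V} {ρ : V → ℝ} {φ : V → F}
    {C : ℝ≥0} (hρ : ∀ x, 0 ≤ ρ x) (hρ_int : Integrable ρ μ) (hρ_one : ∫ x, ρ x ∂μ = 1)
    (hφ : LipschitzWith C φ)
    (hex : ConvolutionExists ρ φ (ContinuousLinearMap.lsmul ℝ ℝ) μ) :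
    LipschitzWith C (ρ ⋆[ContinuousLinearMap.lsmul ℝ ℝ, μ] φ) := by
  refine LipschitzWith.of_dist_le_mul fun x y => ?_
  have hpointwise (t : V) : ‖ρ t • φ (x - t) - ρ t • φ (y - t)‖ ≤ ρ t * (C * dist x y) := by
    rw [← smul_sub, norm_smul, Real.norm_of_nonneg (hρ t), ← dist_eq_norm, ← dist_sub_right x y t]
    exact mul_le_mul_of_nonneg_left (hφ.dist_le_mul _ _) (hρ t)
  calc dist _ _ = ‖∫ t, (ρ t • φ (x - t) - ρ t • φ (y - t)) ∂μ‖ := by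
        rw [dist_eq_norm]
        exact congrArg norm (integral_sub (hex x).integrable (hex y).integrable).symm
    _ ≤ ∫ t, ρ t * (C * dist x y) ∂μ :=
        norm_integral_le_of_norm_le (hρ_int.mul_const _) (.of_forall hpointwise)
    _ = C * dist x y := by rw [integral_mul_const, hρ_one, one_mul]

lemma tsupport_convolution_subset_cthickening [MeasurableSpace V] {μ : Measure V} {ρ : V → ℝ}
    {φ : V → F} {δ : ℝ} (hρ : Function.support ρ ⊆ closedBall 0 δ) :
    tsupport (ρ ⋆[ContinuousLinearMap.lsmul ℝ ℝ, μ] φ) ⊆ cthickening δ (tsupport φ) := by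
  refine closure_minimal ((support_convolution_subset _).trans ?_) isClosed_cthickening
  rintro _ ⟨a, ha, c, hc, rfl⟩
  refine mem_cthickening_of_dist_le _ c _ _ (subset_tsupport φ hc) ?_
  simpa using hρ ha

variable [NormedSpace ℝ V] [FiniteDimensional ℝ V] [CompleteSpace F]

lemma exists_contDiff_lipschitzWith_dist_le {φ : V → F} {C : ℝ≥0} (hφ : LipschitzWith C φ)
    {δ : ℝ} (hδ : 0 < δ) :
    ∃ g : V → F, ContDiff ℝ ∞ g ∧ LipschitzWith C g ∧ (∀ x, dist (g x) (φ x) ≤ C * δ) ∧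
      tsupport g ⊆ cthickening δ (tsupport φ) := by
  borelize V
  let μ : Measure V := .addHaar
  let b : ContDiffBump (0 : V) := ⟨δ / 2, δ, half_pos hδ, half_lt_self hδ⟩
  have hφ_loc : LocallyIntegrable φ μ := hφ.continuous.locallyIntegrable
  refine ⟨b.normed μ ⋆[ContinuousLinearMap.lsmul ℝ ℝ, μ] φ,
    b.hasCompactSupport_normed.contDiff_convolution_left _ b.contDiff_normed hφ_loc,
    lipschitzWith_convolution b.nonneg_normed b.integrable_normed b.integral_normed hφ
      (b.hasCompactSupport_normed.convolutionExists_left _ b.continuous_normed hφ_loc),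
    fun x => b.dist_normed_convolution_le hφ.continuous.aestronglyMeasurable fun y hy => ?_,
    tsupport_convolution_subset_cthickening <| b.support_normed_eq.subset.trans
      ball_subset_closedBall⟩
  exact hφ.dist_le_mul_of_le (mem_ball.1 hy).le

lemma exists_seq_isTestFunctionOn_tendsto_gagliardoEnergy [Nontrivial V] [MeasurableSpace V]
    [BorelSpace V] (μ : Measure V) [μ.IsAddHaarMeasure] (hβ : finrank ℝ V < β)
    (hβp : β < finrank ℝ V + p) {φ : V → F} {C : ℝ≥0} (hφ : LipschitzWith C φ)
    (hc : HasCompactSupport φ) {E : Set V} (hE : IsOpen E) (hφE : tsupport φ ⊆ E) :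
    ∃ g : ℕ → V → F, (∀ n, IsTestFunctionOn E (g n)) ∧ TendstoUniformly g φ atTop ∧
      Tendsto (fun n => gagliardoEnergy μ p β (g n)) atTop (𝓝 (gagliardoEnergy μ p β φ)) := by
  obtain ⟨d, hd, hdE⟩ := hc.isCompact.exists_cthickening_subset_open hE hφE
  obtain ⟨M, hM⟩ := hc.exists_bound_of_continuous hφ.continuous
  obtain ⟨δ, -, hδ, hδ_lim⟩ := exists_seq_strictAnti_tendsto' hd
  choose g hg_smooth hg_lip hg_dist hg_supp using
    fun n => exists_contDiff_lipschitzWith_dist_le hφ (hδ n).1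
  have hK : IsCompact (cthickening d (tsupport φ)) := hc.isCompact.cthickening
  have hgK (n) : tsupport (g n) ⊆ cthickening d (tsupport φ) :=
    (hg_supp n).trans (cthickening_mono (hδ n).2.le _)
  have hg_unif : TendstoUniformly g φ atTop := by
    have hCδ : Tendsto (fun n => C * δ n) atTop (𝓝 0) := by simpa using hδ_lim.const_mul (C : ℝ)
    refine Metric.tendstoUniformly_iff.2 fun ε hε => (hCδ.eventually_lt_const hε).mono ?_
    exact fun n hn x => (dist_comm _ _).trans_lt ((hg_dist n x).trans_lt hn)
  have hg_bound (n x) : ‖g n x‖ ≤ M + C * d :=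
    norm_le_norm_add_const_of_dist_le (hg_dist n x) |>.trans <| by
      have := (hδ n).2.le
      gcongr
      exact hM x
  refine ⟨g, fun n => ⟨hg_smooth n, hK.of_isClosed_subset (isClosed_tsupport _) (hgK n),
    (hgK n).trans hdE⟩, hg_unif, ?_⟩
  exact tendsto_gagliardoEnergy hβ hβp hK.measurableSet hK.measure_lt_top.ne hg_lip
    ((norm_nonneg _).trans (hg_bound 0 0)) hg_bound (fun n => (subset_tsupport _).trans (hgK n))
    hg_unif.tendsto_at

end Mollification

section Capacity

variable [NormedSpace ℝ V] {A E : Set V}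

lemma IsTestFunctionOn.const_smul [NormedSpace ℝ F] {φ : V → F} (hφ : IsTestFunctionOn E φ)
    (a : ℝ) : IsTestFunctionOn E (a • φ) :=
  ⟨hφ.1.const_smul a, hφ.2.1.comp_left (smul_zero a),
    (tsupport_comp_subset (smul_zero a) φ).trans hφ.2.2⟩

lemma rpow_mul_le_gagliardoEnergy [MeasurableSpace V] {μ : Measure V} {c : ℝ}
    (hlb : ∀ ψ : V → ℝ, IsTestFunctionOn E ψ → (∀ x ∈ A, 1 ≤ ψ x) → c ≤ gagliardoEnergy μ p β ψ)
    {g : V → ℝ} (hg : IsTestFunctionOn E g) {θ : ℝ} (hθ : 0 < θ) (hA : ∀ x ∈ A, θ ≤ g x) :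
    θ ^ p * c ≤ gagliardoEnergy μ p β g := by
  have hscaled : c ≤ gagliardoEnergy μ p β (θ⁻¹ • g) :=
    hlb (θ⁻¹ • g) (hg.const_smul θ⁻¹) fun x hx => by
      simpa [inv_mul_eq_div, one_le_div hθ] using hA x hx
  rwa [gagliardoEnergy_const_smul, abs_of_pos (inv_pos.2 hθ), Real.inv_rpow hθ.le,
    le_inv_mul_iff₀ (by positivity)] at hscaled

variable [FiniteDimensional ℝ V] [Nontrivial V] [MeasurableSpace V] [BorelSpace V]
  (μ : Measure V) [μ.IsAddHaarMeasure]

lemma exists_lipschitzWith_Icc_gagliardoEnergy_le (hβ : finrank ℝ V < β)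
    (hβp : β < finrank ℝ V + p) {φ : V → ℝ} {C : ℝ≥0} (hφ : LipschitzWith C φ)
    (hc : HasCompactSupport φ) (hA : ∀ x ∈ A, 1 ≤ φ x) :
    ∃ ψ : V → ℝ, LipschitzWith C ψ ∧ tsupport ψ ⊆ tsupport φ ∧ (∀ x, 0 ≤ ψ x ∧ ψ x ≤ 1) ∧
      (∀ x ∈ A, ψ x = 1) ∧ gagliardoEnergy μ p β ψ ≤ gagliardoEnergy μ p β φ := by
  let clamp : ℝ → ℝ := fun t => max 0 (min 1 t)
  have hclamp : LipschitzWith 1 clamp := (LipschitzWith.id.const_min 1).const_max 0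
  refine ⟨clamp ∘ φ, by simpa using hclamp.comp hφ, tsupport_comp_subset (by simp [clamp]) φ,
    fun x => ⟨le_max_left _ _, max_le zero_le_one (min_le_left _ _)⟩,
    fun x hx => by simp [clamp, hA x hx], gagliardoEnergy_comp_le hβ hβp hφ hc hclamp⟩

lemma le_gagliardoEnergy_of_lipschitzWith (hβ : finrank ℝ V < β) (hβp : β < finrank ℝ V + p)
    (hE : IsOpen E) {c : ℝ}
    (hlb : ∀ ψ : V → ℝ, IsTestFunctionOn E ψ → (∀ x ∈ A, 1 ≤ ψ x) → c ≤ gagliardoEnergy μ p β ψ)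
    {φ : V → ℝ} {C : ℝ≥0} (hφ : LipschitzWith C φ) (hc : HasCompactSupport φ)
    (hφE : tsupport φ ⊆ E) (hA : ∀ x ∈ A, 1 ≤ φ x) : c ≤ gagliardoEnergy μ p β φ := by
  obtain ⟨g, hg, hg_unif, hg_lim⟩ :=
    exists_seq_isTestFunctionOn_tendsto_gagliardoEnergy μ hβ hβp hφ hc hE hφE
  have hθ : ∀ θ ∈ Set.Ioo (0 : ℝ) 1, θ ^ p * c ≤ gagliardoEnergy μ p β φ := by
    rintro θ ⟨hθ₀, hθ₁⟩
    refine ge_of_tendsto hg_lim ?_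
    filter_upwards [Metric.tendstoUniformly_iff.1 hg_unif (1 - θ) (sub_pos.2 hθ₁)] with n hn
    refine rpow_mul_le_gagliardoEnergy hlb (hg n) hθ₀ fun x hx => ?_
    have := (abs_lt.1 (hn x)).2
    linarith [hA x hx]
  have hθ_lim : Tendsto (fun θ : ℝ => θ ^ p * c) (𝓝[<] 1) (𝓝 c) := by
    simpa using ((Real.continuousAt_rpow_const 1 p (.inl one_ne_zero)).mul_const c).mono_left
      nhdsWithin_le_nhds
  exact le_of_tendsto hθ_lim (mem_of_superset (Ioo_mem_nhdsLT one_pos) hθ)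

-- Lower bounds instead of `sInf`: with no admissible functions the capacity is `+∞`, while the
-- real `sInf ∅` is `0`.
theorem stmt6_general (hβ : finrank ℝ V < β) (hβp : β < finrank ℝ V + p) (hE : IsOpen E)
    (A : Set V) :
    lowerBounds { c | ∃ φ : V → ℝ, IsTestFunctionOn E φ ∧ (∀ x ∈ A, 1 ≤ φ x) ∧
        c = gagliardoEnergy μ p β φ } =
      lowerBounds { c | ∃ φ : V → ℝ, (∃ C, LipschitzWith C φ) ∧ HasCompactSupport φ ∧
        tsupport φ ⊆ E ∧ (∀ x, 0 ≤ φ x ∧ φ x ≤ 1) ∧ (∀ x ∈ A, φ x = 1) ∧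
        c = gagliardoEnergy μ p β φ } := by
  refine Set.Subset.antisymm (fun c hlb => ?_) (fun c hlb => ?_)
  · rintro _ ⟨φ, ⟨C, hφ⟩, hc, hφE, -, hA, rfl⟩
    exact le_gagliardoEnergy_of_lipschitzWith μ hβ hβp hE
      (fun ψ hψ hψA => hlb ⟨ψ, hψ, hψA, rfl⟩) hφ hc hφE
      fun x hx => (hA x hx).ge
  · rintro _ ⟨φ, ⟨hφ, hc, hφE⟩, hA, rfl⟩
    obtain ⟨C, hφ_lip⟩ := hφ.lipschitzWith_of_hasCompactSupport hc (by simp)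
    obtain ⟨ψ, hψ, hψφ, hψ01, hψA, hle⟩ :=
      exists_lipschitzWith_Icc_gagliardoEnergy_le μ hβ hβp hφ_lip hc hA
    exact (hlb ⟨ψ, ⟨C, hψ⟩, hc.of_isClosed_subset (isClosed_tsupport ψ) hψφ, hψφ.trans hφE,
      hψ01, hψA, rfl⟩).trans hle

end Capacity

end GagliardoEnergy

theorem stmt6 (N : ℕ) (hN : 0 < N) (p s : ℝ) (hp : 1 ≤ p) (hs0 : 0 < s) (hs1 : s < 1)
    (E : Set (Euc N)) (hE : IsOpen E) (A : Set (Euc N)) (hA : IsCompact A) (hAE : A ⊆ E) :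
    fcap N p s A E =
      sInf { c | ∃ φ : Euc N → ℝ, (∃ K, LipschitzWith K φ) ∧ HasCompactSupport φ ∧
        tsupport φ ⊆ E ∧ (∀ x, 0 ≤ φ x ∧ φ x ≤ 1) ∧ (∀ x ∈ A, φ x = 1) ∧
        c = gag N p s φ } := by
  have : Nonempty (Fin N) := ⟨⟨0, hN⟩⟩
  rw [fcap, ← real_sSup_lowerBounds_eq_sInf, ← real_sSup_lowerBounds_eq_sInf]
  exact congrArg sSup <| stmt6_general volume (by rw [finrank_euclideanSpace_fin]; nlinarith)
    (by rw [finrank_euclideanSpace_fin]; nlinarith) hE A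
end

section
/- Let 0 < s < 1 and E ⊆ R^N open. For every compact set Σ ⊆ E, the relative fractional 1-capacity equals cap_{s,1}(Σ; E) = inf{ P_s(O) : O ⋐ E open with smooth boundary, Σ ⊆ O }, where P_s denotes the fractional s-perimeter. In particular, if Σ is the closure of a bounded open convex set then cap_{s,1}(Σ; E) = P_s(Σ). -/
open MeasureTheory Metric Filter
open scoped ENNReal

/-! Substituting `y = x + h`, the energy of `φ` is the integral over `h`, against
`‖h‖ ^ (-(N + s))`, of the modulus `∫ |φ (x + h) - φ x| dx`; the perimeter of a set is the
energy of its indicator. By the coarea formula some superlevel set of an admissible `φ`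
has essentially no more perimeter than `φ` has energy. It need not be regular, so `φ` is first
perturbed by a small linear function that makes the critical points countable: then almost
every level is regular. Conversely, mollifying `1_O` increases no modulus, hence gives an
admissible function of energy at most the perimeter of `O`. That perimeter is truly finite (an
infinite one would be read as `0`), because a tube of width `‖h‖` around a regular boundary
has volume `O(‖h‖)`.

For convex `C`, the points of `C` with `x + h ∉ C` form a set whose translates by multiples of `h`
are disjoint, and along them a compactly supported `φ` with `φ ≥ 1` on `C` must drop by at least
`1` in total. So the modulus of `1_C` is minimal at each `h`, which gives `≥`; the open
neighbourhoods of `C` are convex and their perimeters tend to that of `C`, which gives `≤`. -/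

open scoped Topology Convolution NNReal

section TranslationModulus

variable {V F : Type*} [MeasurableSpace V] [AddGroup V] {μ : Measure V} [NormedAddCommGroup F]

/-- The `L¹` modulus of continuity of `u` along the translation by `h`; it is extended-valued so
that no integrability of `u` has to be tracked. -/
noncomputable def translationModulus (μ : Measure V) (u : V → F) (h : V) : ℝ≥0∞ :=
  ∫⁻ x, ‖u (x + h) - u x‖ₑ ∂μ

@[simp]
theorem translationModulus_zero_right (u : V → F) : translationModulus μ u 0 = 0 := by
  simp [translationModulus]

section Measurable

variable [MeasurableSpace F] [BorelSpace F] [SecondCountableTopology F] [MeasurableAdd₂ V]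

theorem measurable_translationModulus [SFinite μ] {u : V → F} (hu : Measurable u) :
    Measurable (translationModulus μ u) := by
  refine Measurable.lintegral_prod_right' (f := fun p : V × V => ‖u (p.2 + p.1) - u p.2‖ₑ) ?_
  fun_prop

theorem translationModulus_add_le {u v : V → F} (hu : Measurable u) (h : V) :
    translationModulus μ (u + v) h ≤ translationModulus μ u h + translationModulus μ v h := by
  refine le_trans (lintegral_mono fun x => ?_) (lintegral_add_left (by fun_prop) _).le
  simpa only [Pi.add_apply, add_sub_add_comm] using enorm_add_le _ _

end Measurable

theorem translationModulus_clm_comp_le {G : Type*} [NormedAddCommGroup G] [NormedSpace ℝ F]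
    [NormedSpace ℝ G] (L : F →L[ℝ] G) (u : V → F) (h : V) :
    translationModulus μ (L ∘ u) h ≤ ‖L‖ₑ * translationModulus μ u h := by
  rw [translationModulus, translationModulus, ← lintegral_const_mul' _ _ enorm_ne_top]
  refine lintegral_mono fun x => ?_
  simpa only [Function.comp_apply, map_sub] using L.le_opENorm (u (x + h) - u x)

section MeasurableAdd

variable [MeasurableAdd V]

theorem translationModulus_indicator_one {A : Set V} (hA : MeasurableSet A) (h : V) :
    translationModulus μ (A.indicator (1 : V → ℝ)) h =
      μ (A \ (· + h) ⁻¹' A) + μ ((· + h) ⁻¹' A \ A) := by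
  have hA' : MeasurableSet ((· + h) ⁻¹' A) := measurable_add_const h hA
  have h_pt (x : V) : ‖A.indicator (1 : V → ℝ) (x + h) - A.indicator 1 x‖ₑ =
      (A \ (· + h) ⁻¹' A).indicator 1 x + ((· + h) ⁻¹' A \ A).indicator 1 x := by
    by_cases hx : x ∈ A <;> by_cases hxh : x + h ∈ A <;> simp [hx, hxh]
  simp only [translationModulus, h_pt]
  rw [lintegral_add_left (measurable_one.indicator (hA.diff hA')),
    lintegral_indicator_one (hA.diff hA'), lintegral_indicator_one (hA'.diff hA)]

variable [μ.IsAddRightInvariant]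

theorem translationModulus_indicator_one_le {A : Set V} (hA : MeasurableSet A) (h : V) :
    translationModulus μ (A.indicator (1 : V → ℝ)) h ≤ 2 * μ A := by
  rw [translationModulus_indicator_one hA, two_mul]
  exact add_le_add (measure_mono Set.sdiff_subset)
    ((measure_mono Set.sdiff_subset).trans_eq (measure_preimage_add_right μ h A))

theorem translationModulus_le_of_enorm_sub_le {u : V → F} {S : Set V} (hS : MeasurableSet S)
    (hu : Function.support u ⊆ S) {h : V} {b : ℝ≥0∞} (hb : ∀ x, ‖u (x + h) - u x‖ₑ ≤ b) :
    translationModulus μ u h ≤ b * (2 * μ S) := by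
  have hS' : MeasurableSet ((· + h) ⁻¹' S) := measurable_add_const h hS
  calc translationModulus μ u h
      ≤ ∫⁻ x, ((· + h) ⁻¹' S ∪ S).indicator (fun _ => b) x ∂μ := by
        refine lintegral_mono fun x => ?_
        by_cases hx : x ∈ (· + h) ⁻¹' S ∪ S
        · rw [Set.indicator_of_mem hx]
          exact hb x
        · obtain ⟨hxh, hx⟩ := not_or.1 hx
          simp [Function.notMem_support.1 fun hm => hxh (hu hm),
            Function.notMem_support.1 fun hm => hx (hu hm)]
    _ = b * μ ((· + h) ⁻¹' S ∪ S) := by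
        rw [lintegral_indicator (hS'.union hS), setLIntegral_const]
    _ ≤ b * (2 * μ S) := by
        gcongr
        refine (measure_union_le _ _).trans ?_
        rw [measure_preimage_add_right, two_mul]

end MeasurableAdd

theorem translationModulus_indicator_one_le_add [MeasurableAdd₂ V]
    [μ.IsAddRightInvariant] {A B : Set V}
    (hA : MeasurableSet A) (hB : MeasurableSet B) (hAB : A ⊆ B) (h : V) :
    translationModulus μ (B.indicator (1 : V → ℝ)) h ≤
      translationModulus μ (A.indicator (1 : V → ℝ)) h + 2 * μ (B \ A) := by
  have h_split : B.indicator (1 : V → ℝ) = A.indicator 1 + (B \ A).indicator 1 := by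
    ext x
    by_cases hA : x ∈ A <;> by_cases hB : x ∈ B <;> simp_all [hAB _]
  rw [h_split]
  refine (translationModulus_add_le (measurable_one.indicator hA) h).trans ?_
  gcongr
  exact translationModulus_indicator_one_le (hB.diff hA) h

end TranslationModulus

section TranslationEnergy

variable {V F : Type*} [MeasurableSpace V] [AddGroup V] {μ : Measure V} {k : V → ℝ≥0∞}
  [NormedAddCommGroup F]

/-- The nonlocal energy `∬ ‖u(x) - u(y)‖ k(y - x) dμ(x) dμ(y)` with interaction kernel `k`, written
as an integral over displacements `h = y - x`. -/
noncomputable def translationEnergy (μ : Measure V) (k : V → ℝ≥0∞) (u : V → F) : ℝ≥0∞ :=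
  ∫⁻ h, translationModulus μ u h * k h ∂μ

theorem translationEnergy_mono {G : Type*} [NormedAddCommGroup G] {u : V → F} {v : V → G}
    (huv : ∀ h, translationModulus μ u h ≤ translationModulus μ v h) :
    translationEnergy μ k u ≤ translationEnergy μ k v :=
  lintegral_mono fun h => by gcongr; exact huv h

theorem translationEnergy_clm_comp_le {G : Type*} [NormedAddCommGroup G] [NormedSpace ℝ F]
    [NormedSpace ℝ G] (L : F →L[ℝ] G) (u : V → F) :
    translationEnergy μ k (L ∘ u) ≤ ‖L‖ₑ * translationEnergy μ k u := by
  rw [translationEnergy, translationEnergy, ← lintegral_const_mul' _ _ enorm_ne_top]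
  refine lintegral_mono fun h => ?_
  rw [← mul_assoc]
  gcongr
  exact translationModulus_clm_comp_le L u h

theorem translationEnergy_add_le [MeasurableAdd₂ V] [SFinite μ] [MeasurableSpace F] [BorelSpace F]
    [SecondCountableTopology F] (hk : Measurable k) {u v : V → F} (hu : Measurable u) :
    translationEnergy μ k (u + v) ≤ translationEnergy μ k u + translationEnergy μ k v := by
  refine le_trans (lintegral_mono fun h => ?_)
    (lintegral_add_left ((measurable_translationModulus hu).mul hk) _).le
  rw [Pi.mul_apply, ← add_mul]
  gcongr
  exact translationModulus_add_le hu h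

end TranslationEnergy

section Finiteness

variable {V F : Type*} [NormedAddCommGroup V] [MeasurableSpace V] [BorelSpace V] {μ : Measure V}
  {k : V → ℝ≥0∞} [NormedAddCommGroup F]

theorem translationEnergy_lt_top_of_eventually_le (hk : Measurable k)
    (hk_int : ∫⁻ h, min 1 ‖h‖ₑ * k h ∂μ < ∞) {u : V → F} {C : ℝ≥0∞} (hC : C ≠ ∞)
    (h_bdd : ∀ h, translationModulus μ u h ≤ C)
    (h_lip : ∀ᶠ h in 𝓝[≠] 0, translationModulus μ u h ≤ C * ‖h‖ₑ) :
    translationEnergy μ k u < ∞ := by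
  obtain ⟨r, hr0, hr⟩ := Metric.eventually_nhds_iff.1 (eventually_nhdsWithin_iff.1 h_lip)
  set ρ : ℝ≥0∞ := min 1 (ENNReal.ofReal r) with hρ
  have hρ0 : ρ ≠ 0 := by simp [hρ, hr0]
  have hρ1 : ρ ≤ 1 := min_le_left _ _
  have hρ_top : ρ ≠ ∞ := ne_top_of_le_ne_top ENNReal.one_ne_top hρ1
  have h_min (h : V) : translationModulus μ u h ≤ C / ρ * min 1 ‖h‖ₑ := by
    rcases eq_or_ne h 0 with rfl | hh
    · simp
    rcases le_or_gt ρ ‖h‖ₑ with hle | hlt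
    · calc translationModulus μ u h ≤ C := h_bdd h
        _ = C / ρ * ρ := (ENNReal.div_mul_cancel hρ0 hρ_top).symm
        _ ≤ C / ρ * min 1 ‖h‖ₑ := by gcongr; exact le_min hρ1 hle
    · have h_near : dist h 0 < r := by
        rw [dist_zero_right, ← ENNReal.ofReal_lt_ofReal_iff hr0, ofReal_norm]
        exact hlt.trans_le (min_le_right _ _)
      rw [min_eq_right (hlt.le.trans hρ1)]
      refine (hr h_near hh).trans ?_
      gcongr
      exact (ENNReal.le_div_iff_mul_le (Or.inl hρ0) (Or.inl hρ_top)).2 (mul_le_of_le_one_right' hρ1)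
  calc translationEnergy μ k u ≤ ∫⁻ h, C / ρ * (min 1 ‖h‖ₑ * k h) ∂μ := by
        refine lintegral_mono fun h => ?_
        rw [← mul_assoc]
        gcongr
        exact h_min h
    _ = C / ρ * ∫⁻ h, min 1 ‖h‖ₑ * k h ∂μ := lintegral_const_mul _ (by fun_prop)
    _ < ∞ := ENNReal.mul_lt_top (ENNReal.div_lt_top hC hρ0) hk_int

theorem translationEnergy_lt_top_of_contDiff [NormedSpace ℝ V] [NormedSpace ℝ F]
    [IsFiniteMeasureOnCompacts μ] [μ.IsAddRightInvariant] (hk : Measurable k)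
    (hk_int : ∫⁻ h, min 1 ‖h‖ₑ * k h ∂μ < ∞) {u : V → F} (hu : ContDiff ℝ 1 u)
    (hu_supp : HasCompactSupport u) : translationEnergy μ k u < ∞ := by
  obtain ⟨L, hL⟩ := hu.lipschitzWith_of_hasCompactSupport hu_supp one_ne_zero
  obtain ⟨M, hM⟩ := hu_supp.exists_bound_of_continuous hu.continuous
  have h_meas : MeasurableSet (tsupport u) := (isClosed_tsupport u).measurableSet
  have h_incr (x h : V) : ‖u (x + h) - u x‖ₑ ≤ ENNReal.ofReal (M + M) := by
    rw [← ofReal_norm]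
    exact ENNReal.ofReal_le_ofReal ((norm_sub_le _ _).trans (add_le_add (hM _) (hM _)))
  have h_lip (x h : V) : ‖u (x + h) - u x‖ₑ ≤ L * ‖h‖ₑ := by
    simpa only [edist_eq_enorm_sub, add_sub_cancel_left] using hL.edist_le_mul (x + h) x
  have h_fin : 2 * μ (tsupport u) ≠ ∞ :=
    ENNReal.mul_ne_top ENNReal.ofNat_ne_top hu_supp.isCompact.measure_lt_top.ne
  refine translationEnergy_lt_top_of_eventually_le hk hk_int
    (C := max (ENNReal.ofReal (M + M)) L * (2 * μ (tsupport u)))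
    (ENNReal.mul_ne_top (max_lt ENNReal.ofReal_lt_top ENNReal.coe_lt_top).ne h_fin)
    (fun h => ?_) (Eventually.of_forall fun h => ?_)
  · exact translationModulus_le_of_enorm_sub_le h_meas (subset_tsupport u)
      fun x => (h_incr x h).trans (le_max_left _ _)
  · rw [mul_right_comm]
    refine translationModulus_le_of_enorm_sub_le h_meas (subset_tsupport u)
      fun x => (h_lip x h).trans ?_
    gcongr
    exact le_max_right _ _

end Finiteness

section Coarea

theorem enorm_sub_eq_lintegral_indicator_Iio (a b : ℝ) :
    ‖a - b‖ₑ = ∫⁻ t, ‖(Set.Iio a).indicator (1 : ℝ → ℝ) t - (Set.Iio b).indicator 1 t‖ₑ := by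
  wlog hab : b ≤ a generalizing a b
  · simpa only [enorm_sub_rev] using this b a (le_of_not_ge hab)
  have h_pt (t : ℝ) : ‖(Set.Iio a).indicator (1 : ℝ → ℝ) t - (Set.Iio b).indicator 1 t‖ₑ =
      (Set.Ico b a).indicator 1 t := by
    by_cases hb : t < b
    · simp [hb, hb.trans_le hab]
    · by_cases ha : t < a <;> simp [ha, hb, not_lt.1 hb]
  simp only [h_pt]
  rw [lintegral_indicator_one measurableSet_Ico, Real.volume_Ico,
    Real.enorm_of_nonneg (sub_nonneg.2 hab)]

variable {V : Type*} [MeasurableSpace V] [AddGroup V] [MeasurableAdd₂ V] {μ : Measure V} [SFinite μ]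
  {k : V → ℝ≥0∞} {u : V → ℝ}

theorem measurable_enorm_indicator_superlevel_add_sub (hu : Measurable u) :
    Measurable fun p : (ℝ × V) × V => ‖{x | p.1.1 < u x}.indicator (1 : V → ℝ) (p.2 + p.1.2) -
      {x | p.1.1 < u x}.indicator 1 p.2‖ₑ := by
  have h_ind {f : (ℝ × V) × V → V} (hf : Measurable f) :
      Measurable fun p => {x | p.1.1 < u x}.indicator (1 : V → ℝ) (f p) :=
    (measurable_one (α := ℝ)).indicator (measurableSet_lt (by fun_prop : Measurable
      fun p : (ℝ × V) × V => p.1.1) (hu.comp hf))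
  exact ((h_ind (by fun_prop)).sub (h_ind (by fun_prop))).enorm

theorem measurable_translationEnergy_superlevel (hk : Measurable k) (hu : Measurable u) :
    Measurable fun t => translationEnergy μ k ({x | t < u x}.indicator (1 : V → ℝ)) :=
  ((measurable_enorm_indicator_superlevel_add_sub hu).lintegral_prod_right'.mul
    (hk.comp measurable_snd)).lintegral_prod_right'

theorem translationModulus_eq_lintegral_superlevel (hu : Measurable u) (h : V) :
    translationModulus μ u h =
      ∫⁻ t, translationModulus μ ({x | t < u x}.indicator (1 : V → ℝ)) h := by
  have h_meas : Measurable (Function.uncurry fun (t : ℝ) (x : V) =>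
      ‖{y | t < u y}.indicator (1 : V → ℝ) (x + h) - {y | t < u y}.indicator 1 x‖ₑ) :=
    (measurable_enorm_indicator_superlevel_add_sub hu).comp
      (by fun_prop : Measurable fun p : ℝ × V => ((p.1, h), p.2))
  simp only [translationModulus]
  rw [lintegral_lintegral_swap h_meas.aemeasurable]
  exact lintegral_congr fun x => enorm_sub_eq_lintegral_indicator_Iio _ _

theorem translationEnergy_eq_lintegral_superlevel (hk : Measurable k) (hu : Measurable u) :
    translationEnergy μ k u =
      ∫⁻ t, translationEnergy μ k ({x | t < u x}.indicator (1 : V → ℝ)) := by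
  have h_meas : Measurable fun p : ℝ × V =>
      translationModulus μ ({x | p.1 < u x}.indicator (1 : V → ℝ)) p.2 :=
    (measurable_enorm_indicator_superlevel_add_sub hu).lintegral_prod_right'
  simp only [translationEnergy]
  rw [lintegral_lintegral_swap (h_meas.mul (hk.comp measurable_snd)).aemeasurable]
  refine lintegral_congr fun h => ?_
  rw [translationModulus_eq_lintegral_superlevel hu]
  exact (lintegral_mul_const _ (h_meas.comp measurable_prodMk_right)).symm

theorem exists_superlevel_translationEnergy_le (hk : Measurable k) (hu : Measurable u) {a b : ℝ}
    (hab : a < b) {Z : Set ℝ} (hZ : Z.Countable) :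
    ∃ t ∈ Set.Ioo a b, t ∉ Z ∧ translationEnergy μ k ({x | t < u x}.indicator (1 : V → ℝ)) ≤
      translationEnergy μ k u / ENNReal.ofReal (b - a) := by
  have h_ne : volume.restrict (Set.Ioo a b) ≠ 0 := by
    simpa [Measure.restrict_eq_zero] using hab
  have h_null : volume.restrict (Set.Ioo a b) (Z ∪ (Set.Ioo a b)ᶜ) = 0 := by
    rw [measure_union_null_iff]
    exact ⟨hZ.measure_zero _, by simp [Measure.restrict_apply measurableSet_Ioo.compl]⟩
  obtain ⟨t, ht, ht_le⟩ := exists_notMem_null_le_laverage h_ne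
    (measurable_translationEnergy_superlevel (μ := μ) hk hu).aemeasurable h_null
  obtain ⟨htZ, htI⟩ := not_or.1 ht
  refine ⟨t, not_not.1 htI, htZ, ht_le.trans ?_⟩
  rw [setLAverage_eq, Real.volume_Ioo, translationEnergy_eq_lintegral_superlevel hk hu]
  gcongr
  exact Measure.restrict_le_self

end Coarea

section ExitShadow

theorem exists_add_nsmul_notMem_of_isBounded {V : Type*} [NormedAddCommGroup V] [NormedSpace ℝ V]
    {S : Set V} (hS : Bornology.IsBounded S) (x : V) {h : V} (hh : h ≠ 0) :
    ∃ n : ℕ, x + n • h ∉ S := by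
  obtain ⟨R, hR⟩ := hS.exists_norm_le
  obtain ⟨n, hn⟩ := exists_nat_gt ((R + ‖x‖) / ‖h‖)
  refine ⟨n, fun hmem => (div_lt_iff₀ (norm_pos_iff.2 hh)).1 hn |>.not_ge ?_⟩
  calc n * ‖h‖ = ‖(x + n • h) - x‖ := by rw [add_sub_cancel_left, RCLike.norm_nsmul ℝ, nsmul_eq_mul]
    _ ≤ ‖x + n • h‖ + ‖x‖ := norm_sub_le _ _
    _ ≤ R + ‖x‖ := by gcongr; exact hR _ hmem

theorem enorm_le_tsum_enorm_sub_of_hasCompactSupport {V F : Type*} [NormedAddCommGroup V]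
    [NormedSpace ℝ V] [NormedAddCommGroup F] {φ : V → F} (hφ : HasCompactSupport φ) (x : V) {h : V}
    (hh : h ≠ 0) : ‖φ x‖ₑ ≤ ∑' n : ℕ, ‖φ (x + n • h + h) - φ (x + n • h)‖ₑ := by
  obtain ⟨n, hn⟩ := exists_add_nsmul_notMem_of_isBounded hφ.isCompact.isBounded x hh
  have h_tele : ∑ i ∈ Finset.range n, (φ (x + i • h + h) - φ (x + i • h)) = -φ x := by
    have h_sum := Finset.sum_range_sub (fun i : ℕ => φ (x + i • h)) n
    simpa only [succ_nsmul, ← add_assoc, zero_nsmul, add_zero, image_eq_zero_of_notMem_tsupport hn,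
      zero_sub] using h_sum
  calc ‖φ x‖ₑ = ‖∑ i ∈ Finset.range n, (φ (x + i • h + h) - φ (x + i • h))‖ₑ := by
        rw [h_tele, enorm_neg]
    _ ≤ ∑ i ∈ Finset.range n, ‖φ (x + i • h + h) - φ (x + i • h)‖ₑ := enorm_sum_le _ _
    _ ≤ _ := ENNReal.sum_le_tsum _

theorem measure_le_setLIntegral_iUnion_translate {V : Type*} [AddCommGroup V] [MeasurableSpace V]
    [MeasurableAdd V] {μ : Measure V} [μ.IsAddRightInvariant] {P : Set V} (hP : MeasurableSet P)
    {h : V} (h_wander : ∀ x ∈ P, ∀ n : ℕ, x + (n + 1) • h ∉ P) {g : V → ℝ≥0∞} (hg : Measurable g)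
    (h_sum : ∀ x ∈ P, 1 ≤ ∑' n : ℕ, g (x + n • h)) :
    μ P ≤ ∫⁻ x in ⋃ n : ℕ, (· - n • h) ⁻¹' P, g x ∂μ := by
  have h_meas (n : ℕ) : MeasurableSet ((· - n • h) ⁻¹' P) := by
    simpa only [sub_eq_add_neg] using measurable_add_const (-(n • h)) hP
  have h_disj : Pairwise (Function.onFun Disjoint fun n : ℕ => (· - n • h) ⁻¹' P) := by
    refine (pairwise_disjoint_on _).2 fun m n hmn => Set.disjoint_left.2 fun x hxm hxn => ?_
    obtain ⟨d, rfl⟩ := Nat.exists_eq_add_of_lt hmn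
    have h_shift : x - (m + d + 1) • h + (d + 1) • h = x - m • h := by
      rw [add_assoc, add_nsmul, ← sub_sub, sub_add_cancel]
    exact h_wander _ hxn d (h_shift ▸ hxm)
  rw [lintegral_iUnion h_meas h_disj]
  calc μ P ≤ ∫⁻ x in P, ∑' n : ℕ, g (x + n • h) ∂μ := by
        rw [← setLIntegral_one]
        exact setLIntegral_mono' hP h_sum
    _ = ∑' n : ℕ, ∫⁻ x in P, g (x + n • h) ∂μ :=
        lintegral_tsum fun n => (hg.comp (measurable_add_const _)).aemeasurable
    _ = ∑' n : ℕ, ∫⁻ x in (· - n • h) ⁻¹' P, g x ∂μ := by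
        refine tsum_congr fun n => ?_
        rw [← (measurePreserving_add_right μ (n • h)).setLIntegral_comp_preimage (h_meas n) hg]
        simp [Set.preimage_preimage]

theorem mem_of_convex_of_sub_nsmul_mem_of_add_nsmul_mem {V : Type*} [AddCommGroup V] [Module ℝ V]
    {K : Set V} (hK : Convex ℝ K) {x h : V} {m n : ℕ} (hm : x - m • h ∈ K) (hn : x + n • h ∈ K) :
    x ∈ K := by
  have h_conn := (hK.affine_preimage (AffineMap.lineMap x (x + h))).ordConnected
  have h_mem := h_conn.out (x := (-m : ℝ)) (y := (n : ℝ))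
    (by simpa [AffineMap.lineMap_apply, ← sub_eq_neg_add, Nat.cast_smul_eq_nsmul ℝ] using hm)
    (by simpa [AffineMap.lineMap_apply, add_comm, Nat.cast_smul_eq_nsmul ℝ] using hn)
    (show (0 : ℝ) ∈ _ from ⟨by simp, by simp⟩)
  simpa using h_mem

variable {V : Type*} [AddCommGroup V] {K : Set V} {h : V}

/-- The points behind `K` in direction `h`, from which a further step by `h` stays outside a convex
`K`; the increments of a test function over this set pay for the mass of `K` leaving `K`. -/
def exitShadow (K : Set V) (h : V) : Set V :=
  {x | x + h ∉ K ∧ ∃ n : ℕ, x - n • h ∈ K}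

theorem measurableSet_exitShadow [MeasurableSpace V] [MeasurableAdd V] (hK : MeasurableSet K) :
    MeasurableSet (exitShadow K h) := by
  have h_eq : exitShadow K h = ((· + h) ⁻¹' K)ᶜ ∩ ⋃ n : ℕ, (· + -(n • h)) ⁻¹' K := by
    ext x
    simp [exitShadow, sub_eq_add_neg]
  rw [h_eq]
  exact (measurable_add_const h hK).compl.inter
    (MeasurableSet.iUnion fun n => measurable_add_const _ hK)

variable [Module ℝ V]

theorem iUnion_preimage_sub_nsmul_subset_exitShadow (hK : Convex ℝ K) :
    ⋃ n : ℕ, (· - n • h) ⁻¹' (K \ (· + h) ⁻¹' K) ⊆ exitShadow K h := by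
  refine Set.iUnion_subset fun n x hx => ⟨fun hxh => hx.2 ?_, n, hx.1⟩
  refine mem_of_convex_of_sub_nsmul_mem_of_add_nsmul_mem hK (h := h) (m := 1) (n := n) ?_ ?_
  · simpa using hx.1
  · simpa [sub_add_eq_add_sub] using hxh

theorem disjoint_exitShadow_preimage_exitShadow_neg (hK : Convex ℝ K) :
    Disjoint (exitShadow K h) ((· + h) ⁻¹' exitShadow K (-h)) := by
  refine Set.disjoint_left.2 ?_
  rintro x ⟨-, n, hn⟩ ⟨hx, m, hm⟩
  refine hx ?_
  rw [add_neg_cancel_right]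
  refine mem_of_convex_of_sub_nsmul_mem_of_add_nsmul_mem hK hn (n := m + 1) ?_
  rw [smul_neg, sub_neg_eq_add] at hm
  rwa [succ_nsmul', ← add_assoc]

end ExitShadow

section ConvexMinimality

variable {V F : Type*} [NormedAddCommGroup V] [NormedSpace ℝ V] [MeasurableSpace V] [BorelSpace V]
  {μ : Measure V} [μ.IsAddRightInvariant] [NormedAddCommGroup F] [MeasurableSpace F] [BorelSpace F]
  [SecondCountableTopology F] {K : Set V} {φ : V → F}

theorem measure_sdiff_preimage_add_le_setLIntegral_exitShadow (hK : Convex ℝ K)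
    (hK_meas : MeasurableSet K) (hφ_supp : HasCompactSupport φ) (hφ_meas : Measurable φ)
    (hφ : ∀ x ∈ K, 1 ≤ ‖φ x‖ₑ) (h : V) :
    μ (K \ (· + h) ⁻¹' K) ≤ ∫⁻ x in exitShadow K h, ‖φ (x + h) - φ x‖ₑ ∂μ := by
  rcases eq_or_ne h 0 with rfl | hh
  · simp
  have h_wander : ∀ x ∈ K \ (· + h) ⁻¹' K, ∀ n : ℕ, x + (n + 1) • h ∉ K \ (· + h) ⁻¹' K :=
    fun x hx n hxn => hx.2 (mem_of_convex_of_sub_nsmul_mem_of_add_nsmul_mem hK (h := h) (m := 1)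
      (n := n) (by simpa using hx.1) (by simpa [succ_nsmul', add_assoc] using hxn.1))
  refine (measure_le_setLIntegral_iUnion_translate (hK_meas.diff (measurable_add_const h hK_meas))
    h_wander (g := fun x => ‖φ (x + h) - φ x‖ₑ) (by fun_prop) fun x hx => ?_).trans
    (lintegral_mono_set (iUnion_preimage_sub_nsmul_subset_exitShadow hK))
  exact (hφ x hx.1).trans (enorm_le_tsum_enorm_sub_of_hasCompactSupport hφ_supp x hh)

theorem translationModulus_indicator_le_of_convex (hK : Convex ℝ K) (hK_meas : MeasurableSet K)
    (hφ_supp : HasCompactSupport φ) (hφ_meas : Measurable φ) (hφ : ∀ x ∈ K, 1 ≤ ‖φ x‖ₑ) (h : V) :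
    translationModulus μ (K.indicator (1 : V → ℝ)) h ≤ translationModulus μ φ h := by
  have h_exit := measure_sdiff_preimage_add_le_setLIntegral_exitShadow (μ := μ) hK hK_meas hφ_supp
    hφ_meas hφ
  have h_enter : μ ((· + h) ⁻¹' K \ K) ≤
      ∫⁻ x in (· + h) ⁻¹' exitShadow K (-h), ‖φ (x + h) - φ x‖ₑ ∂μ := by
    calc μ ((· + h) ⁻¹' K \ K) = μ ((· + h) ⁻¹' (K \ (· + -h) ⁻¹' K)) := by
          simp [Set.preimage_preimage]
      _ = μ (K \ (· + -h) ⁻¹' K) := measure_preimage_add_right _ _ _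
      _ ≤ ∫⁻ x in exitShadow K (-h), ‖φ (x + -h) - φ x‖ₑ ∂μ := h_exit (-h)
      _ = _ := by
          rw [← (measurePreserving_add_right μ h).setLIntegral_comp_preimage
            (measurableSet_exitShadow hK_meas) (by fun_prop)]
          simp [enorm_sub_rev]
  calc translationModulus μ (K.indicator (1 : V → ℝ)) h
      = μ (K \ (· + h) ⁻¹' K) + μ ((· + h) ⁻¹' K \ K) := translationModulus_indicator_one hK_meas h
    _ ≤ _ := add_le_add (h_exit h) h_enter
    _ = ∫⁻ x in exitShadow K h ∪ (· + h) ⁻¹' exitShadow K (-h), ‖φ (x + h) - φ x‖ₑ ∂μ :=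
        (lintegral_union (measurable_add_const h (measurableSet_exitShadow hK_meas))
          (disjoint_exitShadow_preimage_exitShadow_neg hK)).symm
    _ ≤ translationModulus μ φ h := setLIntegral_le_lintegral _ _

end ConvexMinimality

section ConvexThickening

variable {V : Type*} [NormedAddCommGroup V] [NormedSpace ℝ V] [MeasurableSpace V] [BorelSpace V]
  {μ : Measure V} {k : V → ℝ≥0∞}

theorem translationModulus_indicator_mono_of_convex [ProperSpace V] [μ.IsAddRightInvariant]
    {K A : Set V} (hK : Convex ℝ K) (hK_meas : MeasurableSet K) (hA_meas : MeasurableSet A)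
    (hA : Bornology.IsBounded A) (hKA : K ⊆ A) (h : V) :
    translationModulus μ (K.indicator (1 : V → ℝ)) h ≤
      translationModulus μ (A.indicator (1 : V → ℝ)) h := by
  refine translationModulus_indicator_le_of_convex hK hK_meas ?_
    (measurable_one.indicator hA_meas) (fun x hx => by simp [hKA hx]) h
  exact HasCompactSupport.of_support_subset_isCompact hA.isCompact_closure
    (Set.support_indicator_subset.trans subset_closure)

variable [FiniteDimensional ℝ V] [μ.IsAddHaarMeasure]

theorem translationEnergy_indicator_lt_top_of_convex (hk : Measurable k)
    (hk_int : ∫⁻ h, min 1 ‖h‖ₑ * k h ∂μ < ∞) {K : Set V} (hK : Convex ℝ K)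
    (hK_meas : MeasurableSet K) (hK_bdd : Bornology.IsBounded K) :
    translationEnergy μ k (K.indicator (1 : V → ℝ)) < ∞ := by
  obtain ⟨R, hR, hKR⟩ := hK_bdd.subset_closedBall_lt 0 0
  let φ : ContDiffBump (0 : V) := ⟨R, R + 1, hR, lt_add_one R⟩
  refine (translationEnergy_mono fun h => ?_).trans_lt
    (translationEnergy_lt_top_of_contDiff hk hk_int φ.contDiff φ.hasCompactSupport)
  refine translationModulus_indicator_le_of_convex hK hK_meas φ.hasCompactSupport
    φ.continuous.measurable (fun x hx => ?_) h
  simp [φ.one_of_mem_closedBall (hKR hx)]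

theorem tendsto_measure_thickening_sdiff {C : Set V} (hC : IsCompact C) :
    Tendsto (fun δ => μ (thickening δ C \ C)) (𝓝[>] 0) (𝓝 0) := by
  have h_tendsto := tendsto_measure_thickening_of_isClosed (μ := μ)
    ⟨1, one_pos, hC.isBounded.thickening.measure_lt_top.ne⟩ hC.isClosed
  have h_sub := ENNReal.Tendsto.sub h_tendsto (tendsto_const_nhds (x := μ C))
    (Or.inl hC.measure_lt_top.ne)
  rw [tsub_self] at h_sub
  refine h_sub.congr' ?_
  filter_upwards [self_mem_nhdsWithin] with δ hδ
  exact (measure_sdiff (self_subset_thickening hδ C) hC.measurableSet.nullMeasurableSet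
    hC.measure_lt_top.ne).symm

theorem tendsto_translationModulus_indicator_thickening {C : Set V} (hC : IsCompact C)
    (hC_conv : Convex ℝ C) (h : V) :
    Tendsto (fun δ => translationModulus μ ((thickening δ C).indicator (1 : V → ℝ)) h) (𝓝[>] 0)
      (𝓝 (translationModulus μ (C.indicator (1 : V → ℝ)) h)) := by
  have h_upper := (ENNReal.Tendsto.const_mul (tendsto_measure_thickening_sdiff (μ := μ) hC)
    (Or.inr (ENNReal.ofNat_ne_top (n := 2)))).const_add
      (translationModulus μ (C.indicator (1 : V → ℝ)) h)
  rw [mul_zero, add_zero] at h_upper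
  refine tendsto_of_tendsto_of_tendsto_of_le_of_le' tendsto_const_nhds h_upper ?_ ?_
  · filter_upwards [self_mem_nhdsWithin] with δ hδ
    exact translationModulus_indicator_mono_of_convex hC_conv hC.measurableSet
      isOpen_thickening.measurableSet hC.isBounded.thickening (self_subset_thickening hδ C) h
  · filter_upwards [self_mem_nhdsWithin] with δ hδ
    exact translationModulus_indicator_one_le_add hC.measurableSet isOpen_thickening.measurableSet
      (self_subset_thickening hδ C) h

theorem tendsto_translationEnergy_indicator_thickening (hk : Measurable k)
    (hk_int : ∫⁻ h, min 1 ‖h‖ₑ * k h ∂μ < ∞) {C : Set V} (hC : IsCompact C)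
    (hC_conv : Convex ℝ C) :
    Tendsto (fun δ => translationEnergy μ k ((thickening δ C).indicator (1 : V → ℝ))) (𝓝[>] 0)
      (𝓝 (translationEnergy μ k (C.indicator (1 : V → ℝ)))) := by
  have h_meas (δ : ℝ) : Measurable ((thickening δ C).indicator (1 : V → ℝ)) :=
    measurable_one.indicator isOpen_thickening.measurableSet
  refine tendsto_lintegral_filter_of_dominated_convergence
    (fun h => translationModulus μ ((thickening 1 C).indicator (1 : V → ℝ)) h * k h)
    (Eventually.of_forall fun δ => (measurable_translationModulus (h_meas δ)).mul hk) ?_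
    (translationEnergy_indicator_lt_top_of_convex hk hk_int (hC_conv.thickening 1)
      isOpen_thickening.measurableSet hC.isBounded.thickening).ne ?_
  · filter_upwards [Ioo_mem_nhdsGT zero_lt_one] with δ hδ
    refine Eventually.of_forall fun h => ?_
    gcongr
    exact translationModulus_indicator_mono_of_convex (hC_conv.thickening δ)
      isOpen_thickening.measurableSet isOpen_thickening.measurableSet hC.isBounded.thickening
      (thickening_mono hδ.2.le C) h
  · filter_upwards [ae_lt_top (by fun_prop) hk_int.ne] with h hh_fin
    rcases eq_or_ne h 0 with rfl | hh
    · simp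
    · exact ENNReal.Tendsto.mul_const
        (tendsto_translationModulus_indicator_thickening hC hC_conv h)
        (Or.inr (ENNReal.lt_top_of_mul_ne_top_right hh_fin.ne (by simp [hh])).ne)

end ConvexThickening

section Mollification

variable {V : Type*} [NormedAddCommGroup V] [NormedSpace ℝ V] [MeasurableSpace V] [BorelSpace V]
  [FiniteDimensional ℝ V] {μ : Measure V} [μ.IsAddHaarMeasure]

theorem translationModulus_convolution_le {ρ u : V → ℝ} (hρ : Measurable ρ) (hu : Measurable u)
    (h_exists : ConvolutionExists ρ u (.lsmul ℝ ℝ) μ) (h : V) :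
    translationModulus μ (ρ ⋆[.lsmul ℝ ℝ, μ] u) h ≤
      (∫⁻ t, ‖ρ t‖ₑ ∂μ) * translationModulus μ u h := by
  have h_incr (x : V) : ‖(ρ ⋆[.lsmul ℝ ℝ, μ] u) (x + h) - (ρ ⋆[.lsmul ℝ ℝ, μ] u) x‖ₑ ≤
      ∫⁻ t, ‖ρ t‖ₑ * ‖u (x - t + h) - u (x - t)‖ₑ ∂μ := by
    rw [convolution_def, convolution_def, ← integral_sub (h_exists _) (h_exists _)]
    refine (enorm_integral_le_lintegral_enorm _).trans_eq (lintegral_congr fun t => ?_)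
    rw [← map_sub, ContinuousLinearMap.lsmul_apply, enorm_smul, sub_add_eq_add_sub]
  calc translationModulus μ (ρ ⋆[.lsmul ℝ ℝ, μ] u) h
      ≤ ∫⁻ x, ∫⁻ t, ‖ρ t‖ₑ * ‖u (x - t + h) - u (x - t)‖ₑ ∂μ ∂μ := lintegral_mono h_incr
    _ = ∫⁻ t, ∫⁻ x, ‖ρ t‖ₑ * ‖u (x - t + h) - u (x - t)‖ₑ ∂μ ∂μ :=
        lintegral_lintegral_swap (by fun_prop)
    _ = ∫⁻ t, ‖ρ t‖ₑ * translationModulus μ u h ∂μ := by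
        refine lintegral_congr fun t => ?_
        rw [lintegral_const_mul _ (by fun_prop),
          lintegral_sub_right_eq_self (fun x => ‖u (x + h) - u x‖ₑ) t, translationModulus]
    _ = (∫⁻ t, ‖ρ t‖ₑ ∂μ) * translationModulus μ u h := lintegral_mul_const _ (by fun_prop)

theorem lintegral_enorm_contDiffBump_normed (b : ContDiffBump (0 : V)) :
    ∫⁻ x, ‖b.normed μ x‖ₑ ∂μ = 1 := by
  rw [← ofReal_integral_norm_eq_lintegral_enorm b.integrable_normed]
  simp only [Real.norm_of_nonneg (b.nonneg_normed _), b.integral_normed, ENNReal.ofReal_one]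

theorem exists_contDiff_translationModulus_le_indicator {A O U : Set V} (hA : IsCompact A)
    (hO : IsOpen O) (hAO : A ⊆ O) (hO_cpt : IsCompact (closure O)) (hU : IsOpen U)
    (hOU : closure O ⊆ U) :
    ∃ φ : V → ℝ, ContDiff ℝ (⊤ : ℕ∞) φ ∧ HasCompactSupport φ ∧ tsupport φ ⊆ U ∧ (∀ x ∈ A, φ x = 1) ∧
      ∀ h, translationModulus μ φ h ≤ translationModulus μ (O.indicator (1 : V → ℝ)) h := by
  obtain ⟨δ₁, hδ₁, hδA⟩ := hA.exists_thickening_subset_open hO hAO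
  obtain ⟨δ₂, hδ₂, hδU⟩ := hO_cpt.exists_cthickening_subset_open hU hOU
  let b : ContDiffBump (0 : V) :=
    ⟨min δ₁ δ₂ / 2, min δ₁ δ₂, half_pos (lt_min hδ₁ hδ₂), half_lt_self (lt_min hδ₁ hδ₂)⟩
  have h_meas : Measurable (O.indicator (1 : V → ℝ)) := measurable_one.indicator hO.measurableSet
  have h_loc : LocallyIntegrable (O.indicator (1 : V → ℝ)) μ :=
    (locallyIntegrable_const 1).indicator hO.measurableSet
  set φ := b.normed μ ⋆[.lsmul ℝ ℝ, μ] O.indicator (1 : V → ℝ) with hφ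
  have hφ_supp : tsupport φ ⊆ cthickening δ₂ (closure O) := by
    have h_supp : Function.support φ ⊆ thickening (min δ₁ δ₂) O := by
      refine (support_convolution_subset _).trans ?_
      rw [b.support_normed_eq, ← ball_add_zero]
      gcongr
      exact Set.support_indicator_subset
    rw [cthickening_closure]
    exact ((closure_mono h_supp).trans (closure_thickening_subset_cthickening _ _)).trans
      (cthickening_mono (min_le_right _ _) _)
  refine ⟨φ, b.hasCompactSupport_normed.contDiff_convolution_left _ b.contDiff_normed h_loc,
    hO_cpt.cthickening.of_isClosed_subset (isClosed_tsupport φ) hφ_supp, hφ_supp.trans hδU,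
    fun x hx => ?_, fun h => ?_⟩
  · have h_ball {y : V} (hy : y ∈ ball x (min δ₁ δ₂)) : y ∈ O :=
      hδA (mem_thickening_iff.2 ⟨x, hx, (mem_ball.1 hy).trans_le (min_le_left _ _)⟩)
    rw [hφ, b.normed_convolution_eq_right fun y hy => by simp [h_ball hy, hAO hx]]
    simp [hAO hx]
  · refine (translationModulus_convolution_le b.continuous_normed.measurable h_meas
      (b.hasCompactSupport_normed.convolutionExists_left _ b.continuous_normed h_loc) h).trans_eq ?_
    rw [lintegral_enorm_contDiffBump_normed, one_mul]

end Mollification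

theorem exists_contDiff_eventually_eq_one {V : Type*} [NormedAddCommGroup V] [NormedSpace ℝ V]
    [FiniteDimensional ℝ V] {A U : Set V} (hA : IsCompact A) (hU : IsOpen U) (hAU : A ⊆ U) :
    ∃ η : V → ℝ, ContDiff ℝ (⊤ : ℕ∞) η ∧ HasCompactSupport η ∧ tsupport η ⊆ U ∧
      ∀ᶠ x in 𝓝ˢ A, η x = 1 := by
  obtain ⟨L, hL, hAL, hLU⟩ := exists_compact_between hA hU hAU
  obtain ⟨η, hη_one, hη_zero, -⟩ :=
    exists_contMDiffMap_one_nhds_of_subset_interior (n := ⊤) (modelWithCornersSelf ℝ V) hA.isClosed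
      hAL
  have h_supp : tsupport η ⊆ L :=
    closure_minimal (Function.support_subset_iff'.2 hη_zero) hL.isClosed
  exact ⟨η, η.contMDiff.contDiff, hL.of_isClosed_subset (isClosed_tsupport η) h_supp,
    h_supp.trans hLU, hη_one⟩

theorem abs_le_mul_dist_of_neg_of_nonneg {X : Type*} [PseudoMetricSpace X] {f : X → ℝ} {M : ℝ≥0}
    {B : Set X} (hf : LipschitzOnWith M f B) {x y : X} (hx : x ∈ B) (hy : y ∈ B) (hfx : f x < 0)
    (hfy : 0 ≤ f y) : |f x| ≤ M * dist y x ∧ |f y| ≤ M * dist y x := by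
  have h_dist := hf.dist_le_mul y hy x hx
  rw [Real.dist_eq, abs_of_nonneg (by linarith)] at h_dist
  rw [abs_of_neg hfx, abs_of_nonneg hfy]
  exact ⟨by linarith, by linarith⟩

theorem fderiv_arctan_div_const_apply {V : Type*} [NormedAddCommGroup V]
    [NormedSpace ℝ V] {f : V → ℝ} {x : V} (hf : DifferentiableAt ℝ f x) (r : ℝ) (v : V) :
    fderiv ℝ (fun y => Real.arctan (f y / r)) x v =
      1 / (1 + (f x / r) ^ 2) * (fderiv ℝ f x v / r) := by
  have h_div : HasFDerivAt (fun y => f y / r) (r⁻¹ • fderiv ℝ f x) x := by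
    simpa only [div_eq_inv_mul] using hf.hasFDerivAt.const_mul r⁻¹
  rw [h_div.arctan.fderiv]
  simp [div_eq_inv_mul]

section Tube

variable {V : Type*} [NormedAddCommGroup V] [NormedSpace ℝ V] [MeasurableSpace V] [BorelSpace V]
  [FiniteDimensional ℝ V] {μ : Measure V}

theorem exists_translationModulus_indicator_le_measure_abs_le {f : V → ℝ} (hf : ContDiff ℝ 1 f)
    (hf_bdd : Bornology.IsBounded {x | f x < 0}) :
    ∃ M : ℝ≥0, ∃ B : Set V, IsCompact B ∧ ∀ h, ‖h‖ ≤ 1 →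
      translationModulus μ ({x | f x < 0}.indicator (1 : V → ℝ)) h ≤
        2 * μ (B ∩ {x | |f x| ≤ M * ‖h‖}) := by
  set O : Set V := {x | f x < 0}
  have hO_meas : MeasurableSet O := measurableSet_lt hf.continuous.measurable measurable_const
  obtain ⟨R, hR⟩ := (hf_bdd.cthickening (δ := 1)).subset_closedBall 0
  set B : Set V := closedBall 0 R
  have hB : IsCompact B := isCompact_closedBall 0 R
  have hB_near {x y : V} (hx : x ∈ O) (hxy : ‖y - x‖ ≤ 1) : y ∈ B :=
    hR (mem_cthickening_of_dist_le y x 1 O hx (by rwa [dist_eq_norm]))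
  have hOB {x : V} (hx : x ∈ O) : x ∈ B := hB_near hx (by simp)
  obtain ⟨M, hM⟩ :=
    hf.contDiffOn.exists_lipschitzOnWith one_ne_zero (convex_closedBall (0 : V) R) hB
  refine ⟨M, B, hB, fun h hh => ?_⟩
  rw [translationModulus_indicator_one hO_meas, two_mul]
  gcongr
  · rintro x ⟨hx, hxh⟩
    have hxhB : x + h ∈ B := hB_near hx (by simpa)
    have h_abs := (abs_le_mul_dist_of_neg_of_nonneg hM (hOB hx) hxhB hx (not_lt.1 hxh)).1
    exact ⟨hOB hx, by simpa using h_abs⟩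
  · rintro x ⟨hxh, hx⟩
    have hxB : x ∈ B := hB_near hxh (by simpa)
    have h_abs := (abs_le_mul_dist_of_neg_of_nonneg hM (hOB hxh) hxB hxh (not_lt.1 hx)).2
    exact ⟨hxB, by simpa using h_abs⟩

variable [μ.IsAddHaarMeasure]

theorem integral_fderiv_mul_le_of_abs_le {T p : V → ℝ} (hT : ContDiff ℝ 1 T)
    (hp : ContDiff ℝ 1 p) (hp_supp : HasCompactSupport p) {B : ℝ} (hB : ∀ x, |T x| ≤ B) (v : V) :
    ∫ x, fderiv ℝ T x v * p x ∂μ ≤ B * ∫ x, |fderiv ℝ p x v| ∂μ := by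
  have hT' : Continuous fun x => fderiv ℝ T x v :=
    (hT.continuous_fderiv one_ne_zero).clm_apply continuous_const
  have hp' : Continuous fun x => fderiv ℝ p x v :=
    (hp.continuous_fderiv one_ne_zero).clm_apply continuous_const
  have hp'_supp : HasCompactSupport fun x => fderiv ℝ p x v := hp_supp.fderiv_apply ℝ v
  have hTp' : Integrable (fun x => T x * fderiv ℝ p x v) μ :=
    (hT.continuous.mul hp').integrable_of_hasCompactSupport hp'_supp.mul_left
  have h_parts := integral_mul_fderiv_eq_neg_fderiv_mul_of_integrable
    ((hT'.mul hp.continuous).integrable_of_hasCompactSupport (μ := μ) hp_supp.mul_left) hTp'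
    ((hT.continuous.mul hp.continuous).integrable_of_hasCompactSupport hp_supp.mul_left)
    (fun x _ => hT.differentiable one_ne_zero x) (fun x _ => hp.differentiable one_ne_zero x)
  rw [← neg_eq_iff_eq_neg.2 h_parts, ← integral_neg, ← integral_const_mul]
  refine integral_mono hTp'.neg
    ((hp'.integrable_of_hasCompactSupport hp'_supp).abs.const_mul B) fun x => ?_
  calc -(T x * fderiv ℝ p x v) ≤ |T x * fderiv ℝ p x v| := neg_le_abs _
    _ = |T x| * |fderiv ℝ p x v| := abs_mul _ _
    _ ≤ B * |fderiv ℝ p x v| := by gcongr; exact hB x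

/- Integrate `p = η² ∂ᵥf`, with `η` a cutoff, by parts against `arctan (f / r)`, whose derivative
along `v` is of order `1 / r` where `|f| ≤ r`, while its values stay bounded as `r → 0`. -/
theorem exists_measure_abs_le_le_of_le_abs_fderiv {f : V → ℝ} (hf : ContDiff ℝ 2 f) {K : Set V}
    (hK : IsCompact K) {v : V} {c : ℝ} (hc : 0 < c) (hcK : ∀ x ∈ K, c ≤ |fderiv ℝ f x v|) :
    ∃ C : ℝ≥0, ∀ r > 0, μ (K ∩ {x | |f x| ≤ r}) ≤ C * ENNReal.ofReal r := by
  obtain ⟨η, hη, hη_supp, -, hηK⟩ := exists_contDiff_eventually_eq_one hK isOpen_univ K.subset_univ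
  set p : V → ℝ := fun x => η x ^ 2 * fderiv ℝ f x v
  have hp : ContDiff ℝ 1 p := ((contDiff_infty.1 hη 1).pow 2).mul
    ((hf.fderiv_right (m := 1) (by norm_num)).clm_apply contDiff_const)
  have hp_supp : HasCompactSupport p := (hη_supp.comp_left (zero_pow two_ne_zero)).mul_right
  refine ⟨(2 / c ^ 2 * (Real.pi / 2 * ∫ x, |fderiv ℝ p x v| ∂μ)).toNNReal, fun r hr => ?_⟩
  set T : V → ℝ := fun x => Real.arctan (f x / r)
  have hT : ContDiff ℝ 1 T := ((hf.of_le one_le_two).div_const r).arctan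
  have hT_le (x : V) : |T x| ≤ Real.pi / 2 :=
    abs_le.2 ⟨(Real.neg_pi_div_two_lt_arctan _).le, (Real.arctan_lt_pi_div_two _).le⟩
  set J : V → ℝ := fun x => fderiv ℝ T x v * p x
  have hJ (x : V) : J x = 1 / (1 + (f x / r) ^ 2) / r * (η x * fderiv ℝ f x v) ^ 2 := by
    simp only [J, T, p, fderiv_arctan_div_const_apply (hf.differentiable two_ne_zero x)]
    ring
  have hJ_int : Integrable J μ :=
    (((hT.continuous_fderiv one_ne_zero).clm_apply continuous_const).mul
      hp.continuous).integrable_of_hasCompactSupport hp_supp.mul_left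
  have h_sub : K ∩ {x | |f x| ≤ r} ⊆ {x | c ^ 2 / (2 * r) ≤ J x} := by
    rintro x ⟨hxK, hfx : |f x| ≤ r⟩
    have h_ratio : (f x / r) ^ 2 ≤ 1 := by
      rw [sq_le_one_iff_abs_le_one, abs_div, abs_of_pos hr]
      exact div_le_one_of_le₀ hfx hr.le
    calc c ^ 2 / (2 * r) = 1 / (1 + 1) / r * c ^ 2 := by ring
      _ ≤ 1 / (1 + (f x / r) ^ 2) / r * |fderiv ℝ f x v| ^ 2 := by gcongr; exact hcK x hxK
      _ = J x := by rw [hJ, hηK.self_of_nhdsSet x hxK, one_mul, sq_abs]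
  have h_markov : c ^ 2 / (2 * r) * μ.real {x | c ^ 2 / (2 * r) ≤ J x} ≤
      Real.pi / 2 * ∫ x, |fderiv ℝ p x v| ∂μ :=
    (mul_meas_ge_le_integral_of_nonneg (Eventually.of_forall fun x => by
      rw [hJ, Pi.zero_apply]; positivity) hJ_int _).trans
      (integral_fderiv_mul_le_of_abs_le hT hp hp_supp hT_le v)
  rw [← le_div_iff₀' (by positivity)] at h_markov
  calc μ (K ∩ {x | |f x| ≤ r}) ≤ μ {x | c ^ 2 / (2 * r) ≤ J x} := measure_mono h_sub
    _ = ENNReal.ofReal (μ.real {x | c ^ 2 / (2 * r) ≤ J x}) :=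
        (ENNReal.ofReal_toReal (hJ_int.measure_ge_lt_top (by positivity)).ne).symm
    _ ≤ ENNReal.ofReal (2 / c ^ 2 * (Real.pi / 2 * ∫ x, |fderiv ℝ p x v| ∂μ) * r) :=
        ENNReal.ofReal_le_ofReal (h_markov.trans_eq (by field_simp))
    _ = _ := ENNReal.ofReal_mul' hr.le

theorem exists_mem_nhds_eventually_measure_abs_le_le {f : V → ℝ} (hf : ContDiff ℝ 2 f) {x : V}
    (hfx : f x = 0 → fderiv ℝ f x ≠ 0) :
    ∃ U ∈ 𝓝 x, ∃ C : ℝ≥0, ∀ᶠ r in 𝓝[>] 0, μ (U ∩ {y | |f y| ≤ r}) ≤ C * ENNReal.ofReal r := by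
  rcases eq_or_ne (f x) 0 with hx | hx
  · obtain ⟨v, hv⟩ := DFunLike.ne_iff.1 (hfx hx)
    have hv_pos : 0 < |fderiv ℝ f x v| := abs_pos.2 hv
    have h_cont : Continuous fun y => |fderiv ℝ f y v| :=
      ((hf.continuous_fderiv two_ne_zero).clm_apply continuous_const).abs
    obtain ⟨L, hLx, hL_sub, hL⟩ := local_compact_nhds
      (h_cont.continuousAt.eventually_const_le (half_lt_self hv_pos))
    obtain ⟨C, hC⟩ :=
      exists_measure_abs_le_le_of_le_abs_fderiv (μ := μ) hf hL (half_pos hv_pos) hL_sub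
    exact ⟨L, hLx, C, eventually_mem_nhdsWithin.mono hC⟩
  · have hx_pos : 0 < |f x| := abs_pos.2 hx
    refine ⟨{y | |f x| / 2 < |f y|},
      hf.continuous.abs.continuousAt.eventually_const_lt (half_lt_self hx_pos), 0, ?_⟩
    filter_upwards [Ioo_mem_nhdsGT (half_pos hx_pos)] with r hr
    have h_empty : {y | |f x| / 2 < |f y|} ∩ {y | |f y| ≤ r} = ∅ :=
      Set.eq_empty_of_forall_notMem fun y hy => (hr.2.trans hy.1).not_ge hy.2
    simp [h_empty]

theorem exists_eventually_measure_abs_le_le {f : V → ℝ} (hf : ContDiff ℝ 2 f)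
    (hf_reg : ∀ x, f x = 0 → fderiv ℝ f x ≠ 0) {K : Set V} (hK : IsCompact K) :
    ∃ C : ℝ≥0, ∀ᶠ r in 𝓝[>] 0, μ (K ∩ {x | |f x| ≤ r}) ≤ C * ENNReal.ofReal r := by
  refine hK.induction_on
    (p := fun S => ∃ C : ℝ≥0, ∀ᶠ r in 𝓝[>] 0, μ (S ∩ {x | |f x| ≤ r}) ≤ C * ENNReal.ofReal r)
    ⟨0, by simp⟩ ?_ ?_ fun x _ => ?_
  · rintro S T hST ⟨C, hC⟩
    exact ⟨C, hC.mono fun r hr => (measure_mono (Set.inter_subset_inter_left _ hST)).trans hr⟩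
  · rintro S T ⟨C, hC⟩ ⟨D, hD⟩
    refine ⟨C + D, ?_⟩
    filter_upwards [hC, hD] with r hrC hrD
    rw [Set.union_inter_distrib_right, ENNReal.coe_add, add_mul]
    exact (measure_union_le _ _).trans (add_le_add hrC hrD)
  · obtain ⟨U, hU, hUC⟩ := exists_mem_nhds_eventually_measure_abs_le_le (μ := μ) hf (hf_reg x)
    exact ⟨U, mem_nhdsWithin_of_mem_nhds hU, hUC⟩

theorem translationEnergy_indicator_lt_top_of_regular {k : V → ℝ≥0∞} (hk : Measurable k)
    (hk_int : ∫⁻ h, min 1 ‖h‖ₑ * k h ∂μ < ∞) {f : V → ℝ} (hf : ContDiff ℝ 2 f)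
    (hf_reg : ∀ x, f x = 0 → fderiv ℝ f x ≠ 0) (hf_bdd : Bornology.IsBounded {x | f x < 0}) :
    translationEnergy μ k ({x | f x < 0}.indicator (1 : V → ℝ)) < ∞ := by
  have hO_meas : MeasurableSet {x | f x < 0} :=
    measurableSet_lt hf.continuous.measurable measurable_const
  obtain ⟨M, B, hB, hM⟩ :=
    exists_translationModulus_indicator_le_measure_abs_le (μ := μ) (hf.of_le one_le_two) hf_bdd
  obtain ⟨C, hC⟩ := exists_eventually_measure_abs_le_le (μ := μ) hf hf_reg hB
  have h_scale : Tendsto (fun h : V => (M + 1 : ℝ) * ‖h‖) (𝓝[≠] 0) (𝓝[>] 0) := by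
    refine tendsto_nhdsWithin_iff.2 ⟨?_, ?_⟩
    · exact (Continuous.tendsto' (by fun_prop) 0 0 (by simp)).mono_left nhdsWithin_le_nhds
    · filter_upwards [self_mem_nhdsWithin] with h hh
      exact mul_pos (by positivity) (norm_pos_iff.2 hh)
  refine translationEnergy_lt_top_of_eventually_le hk hk_int
    (C := max (2 * μ {x | f x < 0}) (2 * (C * (M + 1)))) ?_ (fun h => ?_) ?_
  · exact (max_lt (ENNReal.mul_lt_top ENNReal.ofNat_lt_top hf_bdd.measure_lt_top)
      (by finiteness)).ne
  · exact (translationModulus_indicator_one_le hO_meas h).trans (le_max_left _ _)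
  · filter_upwards [h_scale.eventually hC,
      nhdsWithin_le_nhds (closedBall_mem_nhds (0 : V) one_pos)] with h hCh hh
    calc translationModulus μ ({x | f x < 0}.indicator (1 : V → ℝ)) h
        ≤ 2 * μ (B ∩ {x | |f x| ≤ M * ‖h‖}) := hM h (mem_closedBall_zero_iff.1 hh)
      _ ≤ 2 * μ (B ∩ {x | |f x| ≤ (M + 1) * ‖h‖}) := by
          gcongr 2 * μ (B ∩ {x | _ ≤ ?_ * _})
          exact (lt_add_one _).le
      _ ≤ 2 * (C * ENNReal.ofReal ((M + 1) * ‖h‖)) := by gcongr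
      _ = 2 * (C * (M + 1)) * ‖h‖ₑ := by
          rw [ENNReal.ofReal_mul (by positivity), ofReal_norm,
            ENNReal.ofReal_add M.coe_nonneg zero_le_one, ENNReal.ofReal_coe_nnreal,
            ENNReal.ofReal_one]
          ring
      _ ≤ _ := by gcongr; exact le_max_right _ _

end Tube

section CriticalPoints

variable {V : Type*} [NormedAddCommGroup V] [NormedSpace ℝ V] [FiniteDimensional ℝ V]

theorem ae_countable_preimage_singleton [MeasurableSpace V] [BorelSpace V] (μ : Measure V)
    [μ.IsAddHaarMeasure] {g : V → V} (hg : Differentiable ℝ g) :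
    ∀ᵐ w ∂μ, (g ⁻¹' {w}).Countable := by
  have h_sard : μ (g '' {x | (fderiv ℝ g x).det = 0}) = 0 :=
    addHaar_image_eq_zero_of_det_fderivWithin_eq_zero μ
      (fun x _ => (hg x).hasFDerivAt.hasFDerivWithinAt) fun x hx => hx
  filter_upwards [measure_eq_zero_iff_ae_notMem.1 h_sard] with w hw
  refine (HereditarilyLindelofSpace.isLindelof _).countable_of_isDiscrete
    (isDiscrete_iff_nhdsNE.2 fun x hx => ?_)
  have h_det : (fderiv ℝ g x).det ≠ 0 := fun h => hw ⟨x, h, hx⟩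
  rw [← disjoint_iff, disjoint_principal_right]
  exact (hg x).hasFDerivAt.eventually_ne
    ⟨_, ((fderiv ℝ g x).toContinuousLinearEquivOfDetNeZero h_det).antilipschitz⟩

theorem exists_norm_lt_countable_fderiv_add_eq_zero {φ : V → ℝ} (hφ : ContDiff ℝ 2 φ) {r : ℝ}
    (hr : 0 < r) : ∃ ℓ : StrongDual ℝ V, ‖ℓ‖ < r ∧ {x | fderiv ℝ φ x + ℓ = 0}.Countable := by
  borelize V
  have h_finrank : Module.finrank ℝ (StrongDual ℝ V) = Module.finrank ℝ V :=
    LinearMap.toContinuousLinearMap.finrank_eq.symm.trans Subspace.dual_finrank_eq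
  let e : StrongDual ℝ V ≃L[ℝ] V := .ofFinrankEq h_finrank
  have h_diff : Differentiable ℝ fun x => e (-fderiv ℝ φ x) :=
    e.differentiable.comp ((hφ.fderiv_right (m := 1) (by norm_num)).differentiable one_ne_zero).neg
  obtain ⟨w, hw_fiber, hw_ball⟩ := (Measure.dense_of_ae
    (ae_countable_preimage_singleton Measure.addHaar h_diff)).exists_mem_open
    (e.symm.continuous.isOpen_preimage _ (isOpen_ball (x := 0) (ε := r)))
    ⟨0, by simpa using hr⟩
  refine ⟨e.symm w, mem_ball_zero_iff.1 hw_ball, hw_fiber.mono fun x hx => ?_⟩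
  rw [Set.mem_preimage, Set.mem_singleton_iff, ← e.eq_symm_apply]
  exact neg_eq_of_add_eq_zero_right hx

end CriticalPoints

section RegularSuperlevel

variable {V : Type*} [NormedAddCommGroup V] [NormedSpace ℝ V] [FiniteDimensional ℝ V]

theorem exists_contDiff_eventually_eq_self {A U : Set V} (hA : IsCompact A) (hU : IsOpen U)
    (hAU : A ⊆ U) :
    ∃ W : V → V, ContDiff ℝ (⊤ : ℕ∞) W ∧ HasCompactSupport W ∧ tsupport W ⊆ U ∧
      ∀ᶠ x in 𝓝ˢ A, W x = x := by
  obtain ⟨η, hη, hη_supp, hηU, hη_one⟩ := exists_contDiff_eventually_eq_one hA hU hAU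
  exact ⟨fun x => η x • x, hη.smul contDiff_id, hη_supp.smul_right,
    (closure_mono (Function.support_smul_subset_left _ _)).trans hηU,
    hη_one.mono fun x hx => by simp [hx]⟩

theorem exists_perturbation_countable_critical [MeasurableSpace V] [BorelSpace V] {μ : Measure V}
    [μ.IsAddHaarMeasure] {k : V → ℝ≥0∞} (hk : Measurable k)
    (hk_int : ∫⁻ h, min 1 ‖h‖ₑ * k h ∂μ < ∞) {φ : V → ℝ} (hφ : ContDiff ℝ (⊤ : ℕ∞) φ)
    (hφ_supp : HasCompactSupport φ) {U : Set V} (hU : IsOpen U) (hφU : tsupport φ ⊆ U) {ε : ℝ}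
    (hε : 0 < ε) :
    ∃ ψ : V → ℝ, ContDiff ℝ (⊤ : ℕ∞) ψ ∧ HasCompactSupport ψ ∧ tsupport ψ ⊆ U ∧
      (∀ x, |ψ x - φ x| ≤ ε) ∧ {x ∈ tsupport φ | fderiv ℝ ψ x = 0}.Countable ∧
      translationEnergy μ k ψ ≤ translationEnergy μ k φ + ENNReal.ofReal ε := by
  obtain ⟨W, hW, hW_supp, hWU, hW_self⟩ := exists_contDiff_eventually_eq_self hφ_supp hU hφU
  obtain ⟨R, hR⟩ := hW_supp.exists_bound_of_continuous hW.continuous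
  have hW_fin : translationEnergy μ k W ≠ ∞ :=
    (translationEnergy_lt_top_of_contDiff hk hk_int (contDiff_infty.1 hW 1) hW_supp).ne
  set S : ℝ := max R (translationEnergy μ k W).toReal
  have hS : 0 < S + 1 :=
    add_pos_of_nonneg_of_pos (ENNReal.toReal_nonneg.trans (le_max_right _ _)) one_pos
  obtain ⟨ℓ, hℓ, h_crit⟩ := exists_norm_lt_countable_fderiv_add_eq_zero
    (contDiff_infty.1 hφ 2) (div_pos hε hS)
  have hℓS : ‖ℓ‖ * S ≤ ε := by
    rw [lt_div_iff₀ hS] at hℓ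
    nlinarith [norm_nonneg ℓ]
  have hψ : ContDiff ℝ (⊤ : ℕ∞) (φ + ℓ ∘ W) := hφ.add (ℓ.contDiff.comp hW)
  have hψ_supp : tsupport (φ + ℓ ∘ W) ⊆ tsupport φ ∪ tsupport W :=
    (tsupport_add φ (ℓ ∘ W)).trans (Set.union_subset_union_right _
      (closure_mono (Function.support_comp_subset (map_zero ℓ) W)))
  refine ⟨φ + ℓ ∘ W, hψ, hφ_supp.add (hW_supp.comp_left (map_zero ℓ)),
    hψ_supp.trans (Set.union_subset hφU hWU), fun x => ?_, h_crit.mono ?_, ?_⟩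
  · calc |(φ + ℓ ∘ W) x - φ x| = ‖ℓ (W x)‖ := by simp
      _ ≤ ‖ℓ‖ * S := ℓ.le_opNorm_of_le ((hR x).trans (le_max_left _ _))
      _ ≤ ε := hℓS
  · rintro x ⟨hx, hx_crit⟩
    have h_eq : φ + ℓ ∘ W =ᶠ[𝓝 x] fun y => φ y + ℓ y := by
      filter_upwards [eventually_nhdsSet_iff_forall.1 hW_self x hx] with y hy
      simp [hy]
    rw [h_eq.fderiv_eq, fderiv_fun_add (hφ.differentiable (by simp) x) ℓ.differentiableAt,
      ℓ.fderiv] at hx_crit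
    exact hx_crit
  · refine (translationEnergy_add_le hk hφ.continuous.measurable).trans ?_
    gcongr
    calc translationEnergy μ k (ℓ ∘ W) ≤ ‖ℓ‖ₑ * translationEnergy μ k W :=
          translationEnergy_clm_comp_le ℓ W
      _ = ENNReal.ofReal (‖ℓ‖ * (translationEnergy μ k W).toReal) := by
          rw [ENNReal.ofReal_mul (norm_nonneg _), ofReal_norm, ENNReal.ofReal_toReal hW_fin]
      _ ≤ ENNReal.ofReal ε := by
          gcongr
          exact hℓS.trans' (by gcongr; exact le_max_right _ _)

theorem exists_regular_sublevel_energy_le [MeasurableSpace V] [BorelSpace V] {μ : Measure V}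
    [μ.IsAddHaarMeasure] {k : V → ℝ≥0∞} (hk : Measurable k)
    (hk_int : ∫⁻ h, min 1 ‖h‖ₑ * k h ∂μ < ∞) {φ : V → ℝ} (hφ : ContDiff ℝ (⊤ : ℕ∞) φ)
    (hφ_supp : HasCompactSupport φ) {U : Set V} (hU : IsOpen U) (hφU : tsupport φ ⊆ U) {A : Set V}
    (hφA : ∀ x ∈ A, 1 ≤ φ x) {ε : ℝ} (hε : 0 < ε) (hε_lt : ε < 1 / 2) :
    ∃ f : V → ℝ, ContDiff ℝ (⊤ : ℕ∞) f ∧ (∀ x, f x = 0 → fderiv ℝ f x ≠ 0) ∧ A ⊆ {x | f x < 0} ∧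
      IsCompact (closure {x | f x < 0}) ∧ closure {x | f x < 0} ⊆ U ∧
      translationEnergy μ k ({x | f x < 0}.indicator (1 : V → ℝ)) ≤
        (translationEnergy μ k φ + ENNReal.ofReal ε) / ENNReal.ofReal (1 - 2 * ε) := by
  obtain ⟨ψ, hψ, hψ_supp, hψU, h_near, h_crit, h_energy⟩ :=
    exists_perturbation_countable_critical (μ := μ) hk hk_int hφ hφ_supp hU hφU hε
  obtain ⟨t, ⟨ht_lo, ht_hi⟩, ht_reg, ht_energy⟩ := exists_superlevel_translationEnergy_le (μ := μ)
    hk hψ.continuous.measurable (show ε < 1 - ε by linarith) (h_crit.image ψ)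
  have h_set : {x | t - ψ x < 0} = {x | t < ψ x} := by simp only [sub_neg]
  have h_cl : closure {x | t - ψ x < 0} ⊆ tsupport ψ := by
    rw [h_set]
    exact closure_mono fun x hx => ((hε.trans ht_lo).trans hx).ne'
  refine ⟨fun x => t - ψ x, contDiff_const.sub hψ, fun x hx => ?_, fun x hx => ?_,
    hψ_supp.isCompact.of_isClosed_subset isClosed_closure h_cl, h_cl.trans hψU, ?_⟩
  · rw [fderiv_const_sub, neg_ne_zero]
    have hψx : ψ x = t := by linarith
    have hφx : φ x ≠ 0 := fun h0 => by
      have := (abs_le.1 (h_near x)).2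
      linarith
    exact fun h0 => ht_reg ⟨x, ⟨subset_tsupport φ hφx, h0⟩, hψx⟩
  · have := (abs_le.1 (h_near x)).1
    have := hφA x hx
    rw [Set.mem_ofPred_eq]
    linarith
  · rw [h_set, show 1 - 2 * ε = 1 - ε - ε by ring]
    refine ht_energy.trans ?_
    gcongr

end RegularSuperlevel

section FractionalKernel

variable {V : Type*} [NormedAddCommGroup V]

/-- The kernel `‖h‖ ^ (-α)` for which `translationEnergy` is a fractional seminorm: the
`W^{s,1}` Gagliardo seminorm on `ℝ^N` corresponds to `α = N + s`. It vanishes at `h = 0` when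
`α ≠ 0`, where the translation modulus vanishes as well. -/
noncomputable def fractionalKernel (α : ℝ) (h : V) : ℝ≥0∞ := ENNReal.ofReal (‖h‖ ^ (-α))

variable [MeasurableSpace V]

theorem measurable_fractionalKernel [OpensMeasurableSpace V] (α : ℝ) :
    Measurable (fractionalKernel α : V → ℝ≥0∞) := by
  unfold fractionalKernel
  fun_prop

theorem integral_abs_sub_div_norm_rpow [BorelSpace V] [SecondCountableTopology V] {μ : Measure V}
    [SFinite μ] [μ.IsAddLeftInvariant] (α : ℝ) {u : V → ℝ} (hu : Measurable u) :
    ∫ z : V × V, |u z.1 - u z.2| / ‖z.1 - z.2‖ ^ α ∂(μ.prod μ) =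
      (translationEnergy μ (fractionalKernel α) u).toReal := by
  have hk : Measurable (fractionalKernel α : V → ℝ≥0∞) := measurable_fractionalKernel α
  have h_integrand (z : V × V) : ENNReal.ofReal (|u z.1 - u z.2| / ‖z.1 - z.2‖ ^ α) =
      ‖u z.2 - u z.1‖ₑ * fractionalKernel α (z.2 - z.1) := by
    rw [fractionalKernel, Real.rpow_neg (norm_nonneg _), div_eq_mul_inv,
      ENNReal.ofReal_mul (abs_nonneg _), ← Real.norm_eq_abs, ofReal_norm, enorm_sub_rev,
      norm_sub_rev]
  rw [integral_eq_lintegral_of_nonneg_ae (Eventually.of_forall fun z => by positivity)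
    (Measurable.aestronglyMeasurable (by fun_prop))]
  congr 1
  calc ∫⁻ z : V × V, ENNReal.ofReal (|u z.1 - u z.2| / ‖z.1 - z.2‖ ^ α) ∂(μ.prod μ)
      = ∫⁻ x, ∫⁻ y, ‖u y - u x‖ₑ * fractionalKernel α (y - x) ∂μ ∂μ := by
        simp_rw [h_integrand]
        exact lintegral_prod _ (by fun_prop)
    _ = ∫⁻ x, ∫⁻ h, ‖u (x + h) - u x‖ₑ * fractionalKernel α h ∂μ ∂μ := by
        refine lintegral_congr fun x => ?_
        rw [← lintegral_add_left_eq_self _ x]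
        simp only [add_sub_cancel_left]
    _ = ∫⁻ h, ∫⁻ x, ‖u (x + h) - u x‖ₑ * fractionalKernel α h ∂μ ∂μ :=
        lintegral_lintegral_swap (by fun_prop)
    _ = translationEnergy μ (fractionalKernel α) u :=
        lintegral_congr fun h => lintegral_mul_const _ (by fun_prop)

theorem integrableOn_min_one_mul_rpow {s : ℝ} (hs0 : 0 < s) (hs1 : s < 1) :
    IntegrableOn (fun r : ℝ => min 1 r * r ^ (-1 - s)) (Set.Ioi 0) := by
  rw [← Set.Ioc_union_Ioi_eq_Ioi (zero_le_one (α := ℝ))]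
  refine IntegrableOn.union ?_ ?_
  · have h_pow : IntegrableOn (fun r : ℝ => r ^ (-s)) (Set.Ioc 0 1) := by
      rw [← intervalIntegrable_iff_integrableOn_Ioc_of_le zero_le_one]
      exact intervalIntegral.intervalIntegrable_rpow' (by linarith)
    refine h_pow.congr_fun (fun r hr => ?_) measurableSet_Ioc
    rw [min_eq_right hr.2, ← Real.rpow_one_add' hr.1.le (by linarith)]
    ring_nf
  · have h_pow : IntegrableOn (fun r : ℝ => r ^ (-1 - s)) (Set.Ioi 1) :=
      integrableOn_Ioi_rpow_of_lt (by linarith) one_pos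
    exact h_pow.congr_fun (fun r hr => by rw [min_eq_left hr.le, one_mul]) measurableSet_Ioi

theorem lintegral_min_one_mul_fractionalKernel_lt_top [NormedSpace ℝ V] [BorelSpace V]
    [FiniteDimensional ℝ V] (μ : Measure V) [μ.IsAddHaarMeasure] {s : ℝ} (hs0 : 0 < s)
    (hs1 : s < 1) :
    ∫⁻ h : V, min 1 ‖h‖ₑ * fractionalKernel (Module.finrank ℝ V + s) h ∂μ < ∞ := by
  rcases subsingleton_or_nontrivial V with hV | hV
  · simp [Subsingleton.elim _ (0 : V)]
  set α : ℝ := Module.finrank ℝ V + s with hα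
  have h_radial : Integrable (fun h : V => min 1 ‖h‖ * ‖h‖ ^ (-α)) μ := by
    rw [integrable_fun_norm_addHaar μ (f := fun r => min 1 r * r ^ (-α))]
    refine (integrableOn_min_one_mul_rpow hs0 hs1).congr_fun (fun r hr => ?_) measurableSet_Ioi
    have h_exp : ((Module.finrank ℝ V - 1 : ℕ) : ℝ) + -α = -1 - s := by
      rw [Nat.cast_pred Module.finrank_pos, hα]
      ring
    rw [smul_eq_mul, mul_left_comm, ← Real.rpow_natCast, ← Real.rpow_add hr, h_exp]
  convert h_radial.lintegral_lt_top using 3 with h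
  rw [fractionalKernel, ENNReal.ofReal_mul (by positivity), ENNReal.ofReal_min, ofReal_norm,
    ENNReal.ofReal_one]

end FractionalKernel

section Capacity

variable {N : ℕ} {s : ℝ} {A E O : Set (Euc N)} {φ : Euc N → ℝ}

theorem gag_one_eq_toReal_translationEnergy (hφ : Measurable φ) :
    gag N 1 s φ = (translationEnergy volume (fractionalKernel (N + s)) φ).toReal := by
  rw [← integral_abs_sub_div_norm_rpow _ hφ]
  simp only [gag, Real.rpow_one, mul_one, Measure.volume_eq_prod]

theorem sPer_eq_toReal_translationEnergy (hA : MeasurableSet A) :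
    sPer N s A = (translationEnergy volume (fractionalKernel (N + s))
      (A.indicator (1 : Euc N → ℝ))).toReal := by
  rw [← integral_abs_sub_div_norm_rpow _ (measurable_one.indicator hA)]
  rfl

theorem lintegral_min_one_mul_fractionalKernel_euc_lt_top (N : ℕ) (hs0 : 0 < s) (hs1 : s < 1) :
    ∫⁻ h : Euc N, min 1 ‖h‖ₑ * fractionalKernel (N + s) h < ∞ := by
  simpa only [finrank_euclideanSpace_fin] using
    lintegral_min_one_mul_fractionalKernel_lt_top (volume : Measure (Euc N)) hs0 hs1

theorem translationEnergy_lt_top_of_testOn (hs0 : 0 < s) (hs1 : s < 1) (hφ : TestOn E φ) :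
    translationEnergy volume (fractionalKernel (N + s)) φ < ∞ :=
  translationEnergy_lt_top_of_contDiff (measurable_fractionalKernel _)
    (lintegral_min_one_mul_fractionalKernel_euc_lt_top N hs0 hs1) (contDiff_infty.1 hφ.1 1) hφ.2.1

theorem translationEnergy_indicator_lt_top_of_smoothBdry (hs0 : 0 < s) (hs1 : s < 1)
    (hO : SmoothBdry O) (hO_bdd : Bornology.IsBounded O) :
    translationEnergy volume (fractionalKernel (N + s)) (O.indicator (1 : Euc N → ℝ)) < ∞ := by
  obtain ⟨f, hf, rfl, hf_reg⟩ := hO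
  exact translationEnergy_indicator_lt_top_of_regular (measurable_fractionalKernel _)
    (lintegral_min_one_mul_fractionalKernel_euc_lt_top N hs0 hs1) (contDiff_infty.1 hf 2) hf_reg
    hO_bdd

theorem fcap_le_gag (p : ℝ) (hφ : TestOn E φ) (hφA : ∀ x ∈ A, 1 ≤ φ x) :
    fcap N p s A E ≤ gag N p s φ := by
  refine csInf_le ⟨0, ?_⟩ ⟨φ, hφ, hφA, rfl⟩
  rintro _ ⟨ψ, -, -, rfl⟩
  exact integral_nonneg fun z => by positivity

theorem le_fcap {p c : ℝ} (hE : IsOpen E) (hA : IsCompact A) (hAE : A ⊆ E)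
    (h : ∀ φ, TestOn E φ → (∀ x ∈ A, 1 ≤ φ x) → c ≤ gag N p s φ) : c ≤ fcap N p s A E := by
  obtain ⟨η, hη, hη_supp, hηE, hη_one⟩ := exists_contDiff_eventually_eq_one hA hE hAE
  refine le_csInf
    ⟨_, η, ⟨hη, hη_supp, hηE⟩, fun x hx => (hη_one.self_of_nhdsSet x hx).ge, rfl⟩ ?_
  rintro _ ⟨φ, hφ, hφA, rfl⟩
  exact h φ hφ hφA

theorem fcap_one_le_sPer (hE : IsOpen E) (hA : IsCompact A) (hO : IsOpen O) (hAO : A ⊆ O)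
    (hO_cpt : IsCompact (closure O)) (hOE : closure O ⊆ E)
    (hO_fin : translationEnergy volume (fractionalKernel (N + s))
      (O.indicator (1 : Euc N → ℝ)) < ∞) :
    fcap N 1 s A E ≤ sPer N s O := by
  obtain ⟨φ, hφ, hφ_supp, hφE, hφA, hφO⟩ :=
    exists_contDiff_translationModulus_le_indicator (μ := volume) hA hO hAO hO_cpt hE hOE
  refine (fcap_le_gag 1 ⟨hφ, hφ_supp, hφE⟩ fun x hx => (hφA x hx).ge).trans ?_
  rw [gag_one_eq_toReal_translationEnergy hφ.continuous.measurable,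
    sPer_eq_toReal_translationEnergy hO.measurableSet]
  exact ENNReal.toReal_mono hO_fin.ne (translationEnergy_mono hφO)

theorem exists_smoothBdry_sPer_le (hs0 : 0 < s) (hs1 : s < 1) (hE : IsOpen E) (hφ : TestOn E φ)
    (hφA : ∀ x ∈ A, 1 ≤ φ x) {ε : ℝ} (hε : 0 < ε) (hε_lt : ε < 1 / 2) :
    ∃ O : Set (Euc N), IsOpen O ∧ IsCompact (closure O) ∧ closure O ⊆ E ∧ SmoothBdry O ∧ A ⊆ O ∧
      sPer N s O ≤ (gag N 1 s φ + ε) / (1 - 2 * ε) := by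
  have hφ_fin := translationEnergy_lt_top_of_testOn hs0 hs1 hφ
  obtain ⟨f, hf, hf_reg, hAf, hf_cpt, hfE, hf_energy⟩ := exists_regular_sublevel_energy_le
    (measurable_fractionalKernel _) (lintegral_min_one_mul_fractionalKernel_euc_lt_top N hs0 hs1)
    hφ.1 hφ.2.1 hE hφ.2.2 hφA hε hε_lt
  have hf_open : IsOpen {x | f x < 0} := isOpen_lt hf.continuous continuous_const
  refine ⟨{x | f x < 0}, hf_open, hf_cpt, hfE, ⟨f, hf, rfl, hf_reg⟩, hAf, ?_⟩
  have h_pos : 0 < 1 - 2 * ε := by linarith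
  have h_toReal := ENNReal.toReal_mono (ENNReal.div_lt_top (by finiteness)
    (ENNReal.ofReal_pos.2 h_pos).ne').ne hf_energy
  rwa [ENNReal.toReal_div, ENNReal.toReal_add hφ_fin.ne ENNReal.ofReal_ne_top,
    ENNReal.toReal_ofReal hε.le, ENNReal.toReal_ofReal h_pos.le,
    ← sPer_eq_toReal_translationEnergy hf_open.measurableSet,
    ← gag_one_eq_toReal_translationEnergy hφ.1.continuous.measurable] at h_toReal

theorem sPer_le_gag_of_convex (hs0 : 0 < s) (hs1 : s < 1) (hA : IsCompact A)
    (hA_conv : Convex ℝ A) (hφ : TestOn E φ) (hφA : ∀ x ∈ A, 1 ≤ φ x) :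
    sPer N s A ≤ gag N 1 s φ := by
  have hφ_meas : Measurable φ := hφ.1.continuous.measurable
  rw [gag_one_eq_toReal_translationEnergy hφ_meas,
    sPer_eq_toReal_translationEnergy hA.measurableSet]
  refine ENNReal.toReal_mono (translationEnergy_lt_top_of_testOn hs0 hs1 hφ).ne
    (translationEnergy_mono fun h => translationModulus_indicator_le_of_convex hA_conv
      hA.measurableSet hφ.2.1 hφ_meas (fun x hx => ?_) h)
  rw [← ofReal_norm, ENNReal.one_le_ofReal]
  exact (hφA x hx).trans (Real.le_norm_self _)

theorem fcap_one_le_sPer_of_convex (hs0 : 0 < s) (hs1 : s < 1) (hE : IsOpen E) (hA : IsCompact A)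
    (hA_conv : Convex ℝ A) (hAE : A ⊆ E) : fcap N 1 s A E ≤ sPer N s A := by
  have hk := measurable_fractionalKernel (V := Euc N) (N + s)
  have hk_int := lintegral_min_one_mul_fractionalKernel_euc_lt_top N hs0 hs1
  obtain ⟨δ₀, hδ₀, hδ₀E⟩ := hA.exists_cthickening_subset_open hE hAE
  have h_lim : Tendsto (fun δ => sPer N s (thickening δ A)) (𝓝[>] 0) (𝓝 (sPer N s A)) := by
    simp_rw [sPer_eq_toReal_translationEnergy hA.measurableSet,
      sPer_eq_toReal_translationEnergy isOpen_thickening.measurableSet]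
    exact (ENNReal.tendsto_toReal (translationEnergy_indicator_lt_top_of_convex hk hk_int hA_conv
      hA.measurableSet hA.isBounded).ne).comp
      (tendsto_translationEnergy_indicator_thickening hk hk_int hA hA_conv)
  refine ge_of_tendsto h_lim ?_
  filter_upwards [Ioo_mem_nhdsGT hδ₀] with δ hδ
  have h_cl : closure (thickening δ A) ⊆ cthickening δ₀ A :=
    (closure_thickening_subset_cthickening δ A).trans (cthickening_mono hδ.2.le A)
  exact fcap_one_le_sPer hE hA isOpen_thickening (self_subset_thickening hδ.1 A)
    (hA.cthickening.of_isClosed_subset isClosed_closure h_cl) (h_cl.trans hδ₀E)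
    (translationEnergy_indicator_lt_top_of_convex hk hk_int (hA_conv.thickening δ)
      isOpen_thickening.measurableSet hA.isBounded.thickening)

theorem fcap_one_eq_sInf_sPer (hs0 : 0 < s) (hs1 : s < 1) (hE : IsOpen E) (hA : IsCompact A)
    (hAE : A ⊆ E) :
    fcap N 1 s A E = sInf {c | ∃ O : Set (Euc N), IsOpen O ∧ IsCompact (closure O) ∧
      closure O ⊆ E ∧ SmoothBdry O ∧ A ⊆ O ∧ c = sPer N s O} := by
  set S : Set ℝ := {c | ∃ O : Set (Euc N), IsOpen O ∧ IsCompact (closure O) ∧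
    closure O ⊆ E ∧ SmoothBdry O ∧ A ⊆ O ∧ c = sPer N s O}
  have hS_bdd : BddBelow S := by
    refine ⟨0, ?_⟩
    rintro _ ⟨O, -, -, -, -, -, rfl⟩
    exact integral_nonneg fun z => by positivity
  have hS_approx : ∀ φ, TestOn E φ → (∀ x ∈ A, 1 ≤ φ x) → ∀ ε : ℝ, 0 < ε → ε < 1 / 2 →
      ∃ c ∈ S, c ≤ (gag N 1 s φ + ε) / (1 - 2 * ε) := fun φ hφ hφA ε hε hε_lt =>
    let ⟨O, hO, hO_cpt, hOE, hO_bdry, hAO, h_le⟩ :=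
      exists_smoothBdry_sPer_le hs0 hs1 hE hφ hφA hε hε_lt
    ⟨_, ⟨O, hO, hO_cpt, hOE, hO_bdry, hAO, rfl⟩, h_le⟩
  obtain ⟨η, hη, hη_supp, hηE, hη_one⟩ := exists_contDiff_eventually_eq_one hA hE hAE
  obtain ⟨c₀, hc₀, -⟩ := hS_approx η ⟨hη, hη_supp, hηE⟩
    (fun x hx => (hη_one.self_of_nhdsSet x hx).ge) (1 / 4) (by norm_num) (by norm_num)
  refine le_antisymm (le_csInf ⟨c₀, hc₀⟩ ?_) (le_fcap hE hA hAE fun φ hφ hφA => ?_)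
  · rintro _ ⟨O, hO, hO_cpt, hOE, hO_bdry, hAO, rfl⟩
    exact fcap_one_le_sPer hE hA hO hAO hO_cpt hOE
      (translationEnergy_indicator_lt_top_of_smoothBdry hs0 hs1 hO_bdry
        (hO_cpt.isBounded.subset subset_closure))
  · have h_lim : Tendsto (fun ε : ℝ => (gag N 1 s φ + ε) / (1 - 2 * ε)) (𝓝[>] 0)
        (𝓝 (gag N 1 s φ)) := by
      have h_cont : ContinuousAt (fun ε : ℝ => (gag N 1 s φ + ε) / (1 - 2 * ε)) 0 := by
        fun_prop (disch := norm_num)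
      simpa using h_cont.tendsto.mono_left nhdsWithin_le_nhds
    refine ge_of_tendsto h_lim ?_
    filter_upwards [Ioo_mem_nhdsGT (one_half_pos (α := ℝ))] with ε hε
    obtain ⟨c, hc, h_le⟩ := hS_approx φ hφ hφA ε hε.1 hε.2
    exact (csInf_le hS_bdd hc).trans h_le

theorem fcap_one_eq_sPer_of_convex (hs0 : 0 < s) (hs1 : s < 1) (hE : IsOpen E)
    (hA : IsCompact A) (hA_conv : Convex ℝ A) (hAE : A ⊆ E) : fcap N 1 s A E = sPer N s A :=
  le_antisymm (fcap_one_le_sPer_of_convex hs0 hs1 hE hA hA_conv hAE)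
    (le_fcap hE hA hAE fun _ hφ hφA => sPer_le_gag_of_convex hs0 hs1 hA hA_conv hφ hφA)

end Capacity

theorem stmt7_general (N : ℕ) (s : ℝ) (hs0 : 0 < s) (hs1 : s < 1)
    (E : Set (Euc N)) (hE : IsOpen E) :
    (∀ A : Set (Euc N), IsCompact A → A ⊆ E →
      fcap N 1 s A E =
        sInf { c | ∃ O : Set (Euc N), IsOpen O ∧ IsCompact (closure O) ∧ closure O ⊆ E ∧
          SmoothBdry O ∧ A ⊆ O ∧ c = sPer N s O }) ∧
    (∀ C : Set (Euc N), IsCompact C → Convex ℝ C → C ⊆ E → fcap N 1 s C E = sPer N s C) :=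
  ⟨fun _ hA hAE => fcap_one_eq_sInf_sPer hs0 hs1 hE hA hAE,
    fun _ hC hC_conv hCE => fcap_one_eq_sPer_of_convex hs0 hs1 hE hC hC_conv hCE⟩

theorem stmt7 (N : ℕ) (hN : 0 < N) (s : ℝ) (hs0 : 0 < s) (hs1 : s < 1)
    (E : Set (Euc N)) (hE : IsOpen E) :
    (∀ A : Set (Euc N), IsCompact A → A ⊆ E →
      fcap N 1 s A E =
        sInf { c | ∃ O : Set (Euc N), IsOpen O ∧ IsCompact (closure O) ∧ closure O ⊆ E ∧
          SmoothBdry O ∧ A ⊆ O ∧ c = sPer N s O }) ∧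
    (∀ K : Set (Euc N), IsOpen K → Bornology.IsBounded K → Convex ℝ K → closure K ⊆ E →
      fcap N 1 s (closure K) E = sPer N s (closure K)) :=
  (stmt7_general N s hs0 hs1 E hE).imp_right fun h _ _ hK_bdd hK_conv hKE =>
    h _ hK_bdd.isCompact_closure hK_conv.closure hKE
end
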